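/- Let K be a compact Hausdorff space. If there exists a bounded linear operator T : C(K) → C(K) which is injective and bounded below (i.e. an isomorphism onto its range) but not surjective, then the set NM(C(K)) of bounded linear operators on C(K) that are not weak multipliers is spaceable in L(C(K)). -/

import Mathlib

open Filter Topology

/-- A bounded linear operator `T` on `C(K, ℝ)` is a *weak multiplier* if for every bounded
pairwise disjoint sequence `(e_n)` in `C(K, ℝ)` and every sequence `(x_n)` in `K` with
`e_n (x_n) = 0` for all `n`, one has `T (e_n) (x_n) → 0`. -/
def IsWeakMultiplier {K : Type*} [TopologicalSpace K] [CompactSpace K]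
    (T : C(K, ℝ) →L[ℝ] C(K, ℝ)) : Prop :=
  ∀ (e : ℕ → C(K, ℝ)) (x : ℕ → K),
    (∃ M : ℝ, ∀ n, ‖e n‖ ≤ M) →
    (∀ i j, i ≠ j → e i * e j = 0) →
    (∀ n, (e n) (x n) = 0) →
    Filter.Tendsto (fun n => (T (e n)) (x n)) Filter.atTop (nhds 0)

/-- An operator on `C(K, ℝ)` is *weakly compact* if the image of the closed unit ball has
compact closure in the weak topology. -/
def IsWeaklyCompactOp {K : Type*} [TopologicalSpace K] [CompactSpace K]
    (S : C(K, ℝ) →L[ℝ] C(K, ℝ)) : Prop :=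
  IsCompact (closure ((toWeakSpace ℝ C(K, ℝ)) '' (S '' Metric.closedBall 0 1)))

/-- An operator on `C(K, ℝ)` is a *weak multiplication* if it has the form `g•I + S` with
`g ∈ C(K, ℝ)` and `S` weakly compact. -/
def IsWeakMultiplication {K : Type*} [TopologicalSpace K] [CompactSpace K]
    (T : C(K, ℝ) →L[ℝ] C(K, ℝ)) : Prop :=
  ∃ (g : C(K, ℝ)) (S : C(K, ℝ) →L[ℝ] C(K, ℝ)),
    IsWeaklyCompactOp S ∧ T = ContinuousLinearMap.mul ℝ C(K, ℝ) g + S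

/-- A subset `A` of a real vector space is *lineable* if `A ∪ {0}` contains an
infinite-dimensional subspace. -/
def Lineable {X : Type*} [AddCommGroup X] [Module ℝ X] (A : Set X) : Prop :=
  ∃ W : Submodule ℝ X, ¬ FiniteDimensional ℝ W ∧ (W : Set X) ⊆ A ∪ {0}

/-- A subset `A` of a real normed space is *spaceable* if `A ∪ {0}` contains a closed
infinite-dimensional subspace. -/
def Spaceable {X : Type*} [NormedAddCommGroup X] [NormedSpace ℝ X] (A : Set X) : Prop :=
  ∃ W : Submodule ℝ X, IsClosed (W : Set X) ∧ ¬ FiniteDimensional ℝ W ∧ (W : Set X) ⊆ A ∪ {0}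

/-!
A bounded below weak multiplier `T` is surjective. Off the point `x`, the functionals `f ↦ T f x`
are small on disjoint sequences, uniformly in `x`, hence controlled by a single finite measure:
`T f x = g x * f x + ν x f` with `g` bounded and `ν` uniformly controlled. Then `(T ^ 2 + t) f x` is
`(g x ^ 2 + t) * f x` up to controlled terms, so `T ^ 2 + t` is upper semi-Fredholm for `t > 0`;
so is `T ^ 2`, being bounded below. As `T ^ 2 + t` is surjective for large `t`, and the
surjectivity of an injective operator propagates along a path of upper semi-Fredholm operators,
`T ^ 2` is surjective.

One operator `T` that is not a weak multiplier makes the set of all of them spaceable. Let `e n` and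
`x n` witness the failure. The points `x n` at which `T (e n)` is large form an infinite set, in
which disjoint bump functions separate either infinitely many infinite subsets, or the points of a
sequence converging to some `q`. They cut `T` (in the second case minus its value at `q`) into
operators `R j` with pairwise disjoint values, each failing to be a weak multiplier along the same
`e n` and `x n`. For a linear combination `S` of the `R j`, the norm of `S` is at most a constant
times `|S (e n) (x n)|` for infinitely many `n`, so in the closed span `S (e n) (x n) → 0` only for
`S = 0`.
-/

section LinearAlgebra

variable {𝕜 V W : Type*} [Field 𝕜] [AddCommGroup V] [Module 𝕜 V] [AddCommGroup W] [Module 𝕜 W]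

theorem exists_linearMap_injective_or_surjective (𝕜 V W : Type*) [Field 𝕜] [AddCommGroup V]
    [Module 𝕜 V] [AddCommGroup W] [Module 𝕜 W] :
    ∃ f : V →ₗ[𝕜] W, Function.Injective f ∨ Function.Surjective f := by
  let bV := Module.Free.chooseBasis 𝕜 V
  let bW := Module.Free.chooseBasis 𝕜 W
  rcases Function.Embedding.total (Module.Free.ChooseBasisIndex 𝕜 V)
    (Module.Free.ChooseBasisIndex 𝕜 W) with ⟨⟨e, he⟩⟩ | ⟨⟨e, he⟩⟩
  · exact ⟨bV.constr ℕ (bW ∘ e), Or.inl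
      (bV.injective_constr_of_linearIndependent (bW.linearIndependent.comp _ he))⟩
  · have hi : Function.Injective (bW.constr ℕ (bV ∘ e)) :=
      bW.injective_constr_of_linearIndependent (bV.linearIndependent.comp _ he)
    obtain ⟨g, hg⟩ := LinearMap.exists_leftInverse_of_injective _ (LinearMap.ker_eq_bot.2 hi)
    exact ⟨g, Or.inr fun w => ⟨_, LinearMap.congr_fun hg w⟩⟩

theorem surjective_of_injective_of_hasFiniteRange_id_sub {U : V →ₗ[𝕜] V}
    (hU : Function.Injective U) (hfin : (LinearMap.id - U).HasFiniteRange) :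
    Function.Surjective U := by
  let R := LinearMap.range (LinearMap.id - U)
  have : FiniteDimensional 𝕜 R := Module.Finite.of_fg hfin.fg_range
  have hmaps : ∀ r ∈ R, U r ∈ R := by
    rintro _ ⟨y, rfl⟩
    exact ⟨U y, by simp⟩
  have hsurj : Function.Surjective (U.restrict hmaps) :=
    LinearMap.injective_iff_surjective.1 fun a b hab =>
      Subtype.ext (hU (congrArg Subtype.val hab))
  intro y
  obtain ⟨r, hr⟩ := hsurj ⟨y - U y, y, rfl⟩
  have hr : U r = y - U y := congrArg Subtype.val hr
  exact ⟨y + r, by rw [map_add, hr, add_sub_cancel]⟩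

theorem surjective_of_injective_of_surjective_add {A F : V →ₗ[𝕜] W} (hA : Function.Injective A)
    (hF : F.HasFiniteRange) (hAF : Function.Surjective (A + F)) : Function.Surjective A := by
  obtain ⟨S, hS⟩ := (A + F).exists_rightInverse_of_surjective (LinearMap.range_eq_top.2 hAF)
  have hid : LinearMap.id - A ∘ₗ S = F ∘ₗ S := by rw [← hS, LinearMap.add_comp, add_sub_cancel_left]
  have hSi : Function.Injective S :=
    Function.LeftInverse.injective (g := A + F) fun w => LinearMap.congr_fun hS w
  have hAS : Function.Surjective (A ∘ₗ S) :=
    surjective_of_injective_of_hasFiniteRange_id_sub (hA.comp hSi) (hid ▸ hF.comp_right S)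
  exact Function.Surjective.of_comp (g := S) hAS

end LinearAlgebra

section UpperSemiFredholm

variable {𝕜 X Y : Type*} [RCLike 𝕜] [NormedAddCommGroup X] [NormedSpace 𝕜 X]
  [NormedAddCommGroup Y] [NormedSpace 𝕜 Y] {A B F : X →L[𝕜] Y}

theorem surjective_of_nnnorm_sub_lt [CompleteSpace X] (r : A.NonlinearRightInverse)
    (h : ‖B - A‖₊ < r.nnnorm⁻¹) : Function.Surjective B := by
  have happ : ApproximatesLinearOn B A Set.univ ‖B - A‖₊ :=
    ApproximatesLinearOn.approximatesLinearOn_iff_lipschitzOnWith.2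
      (B - A).lipschitz.lipschitzOnWith
  have hnhds : Set.range B ∈ 𝓝 (0 : Y) := by
    simpa using happ.image_mem_nhds r (x := 0) univ_mem (Or.inr h)
  exact LinearMap.range_eq_top.1 <| Submodule.eq_top_of_nonempty_interior' (B : X →ₗ[𝕜] Y).range
    ⟨0, mem_interior_iff_mem_nhds.2 hnhds⟩

theorem isOpen_setOf_surjective [CompleteSpace X] [CompleteSpace Y] :
    IsOpen {A : X →L[𝕜] Y | Function.Surjective A} := by
  refine Metric.isOpen_iff.2 fun A hA => ?_
  have hrange := LinearMap.range_eq_top.2 hA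
  have hpos := A.nonlinearRightInverseOfSurjective_nnnorm_pos hrange
  refine ⟨_, NNReal.coe_pos.2 (inv_pos.2 hpos), fun B hB => ?_⟩
  exact surjective_of_nnnorm_sub_lt (A.nonlinearRightInverseOfSurjective hrange)
    (by rwa [mem_ball_iff_norm] at hB)

theorem surjective_of_mul_norm_le_of_norm_sub_lt [CompleteSpace X] {c : ℝ} (hc : 0 < c)
    (hbound : ∀ x, c * ‖x‖ ≤ ‖A x‖) (hA : Function.Surjective A) (h : ‖B - A‖ < c) :
    Function.Surjective B := by
  choose inv hinv using hA
  have hinv_le : ∀ y, ‖inv y‖ ≤ c⁻¹ * ‖y‖ := fun y => by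
    rw [← div_eq_inv_mul, le_div_iff₀' hc]
    simpa only [hinv] using hbound (inv y)
  refine surjective_of_nnnorm_sub_lt ⟨inv, ⟨c⁻¹, by positivity⟩, hinv_le, hinv⟩ ?_
  rw [← NNReal.coe_lt_coe, NNReal.coe_inv, coe_nnnorm]
  exact h.trans_eq (inv_inv c).symm

theorem isOpen_setOf_antilipschitzWith_not_surjective [CompleteSpace X] :
    IsOpen {A : X →L[𝕜] Y | (∃ K, AntilipschitzWith K A) ∧ ¬ Function.Surjective A} := by
  refine Metric.isOpen_iff.2 fun A ⟨hanti, hA⟩ => ?_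
  obtain ⟨c, hc, hbound⟩ := antilipschitzWith_iff_exists_mul_le_norm.1 hanti
  refine ⟨c / 2, by positivity, fun B hB => ?_⟩
  rw [mem_ball_iff_norm'] at hB
  have hBbound : ∀ x, c / 2 * ‖x‖ ≤ ‖B x‖ := fun x => by
    have hAB : ‖A x‖ ≤ ‖(A - B) x‖ + ‖B x‖ := by simpa using norm_add_le ((A - B) x) (B x)
    linarith [hbound x, (A - B).le_of_opNorm_le hB.le x]
  exact ⟨antilipschitzWith_iff_exists_mul_le_norm.2 ⟨c / 2, by positivity, hBbound⟩, fun hB' =>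
    hA (surjective_of_mul_norm_le_of_norm_sub_lt (by positivity) hBbound hB' hB)⟩

/-- An operator is *upper semi-Fredholm* if it has finite-dimensional kernel and closed range. This
is encoded by the equivalent compactness condition that a bounded sequence whose image converges
has a convergent subsequence. -/
def IsUpperSemiFredholm (A : X →L[𝕜] Y) : Prop :=
  ∀ u : ℕ → X, (∃ M : ℝ, ∀ n, ‖u n‖ ≤ M) → (∃ y, Tendsto (fun n => A (u n)) atTop (𝓝 y)) →
    ∃ φ : ℕ → ℕ, StrictMono φ ∧ ∃ x, Tendsto (u ∘ φ) atTop (𝓝 x)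

theorem IsUpperSemiFredholm.of_antilipschitzWith [CompleteSpace X] {K : NNReal}
    (hA : AntilipschitzWith K A) : IsUpperSemiFredholm A := fun _ _ ⟨_, hy⟩ =>
  ⟨id, strictMono_id, cauchySeq_tendsto_of_complete
    ((hA.isUniformInducing A.uniformContinuous).cauchy_map_iff.1 hy.cauchySeq)⟩

theorem IsUpperSemiFredholm.exists_antilipschitzWith (hA : IsUpperSemiFredholm A)
    (hinj : Function.Injective A) : ∃ K, AntilipschitzWith K A := by
  rw [antilipschitzWith_iff_exists_mul_le_norm]
  by_contra! hcon
  have hunit (n : ℕ) : ∃ x, ‖x‖ = 1 ∧ ‖A x‖ ≤ 1 / ((n : ℝ) + 1) := by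
    obtain ⟨x, hx⟩ := hcon (1 / ((n : ℝ) + 1)) (by positivity)
    have hx0 : x ≠ 0 := by rintro rfl; simp at hx
    have hpos : 0 < ‖x‖ := norm_pos_iff.2 hx0
    refine ⟨(‖x‖⁻¹ : 𝕜) • x, norm_smul_inv_norm hx0, ?_⟩
    rw [map_smul, norm_smul, norm_inv, RCLike.norm_ofReal, abs_norm, inv_mul_le_iff₀ hpos, mul_comm]
    exact hx.le
  choose u hu hAu using hunit
  have hAu0 : Tendsto (fun n => A (u n)) atTop (𝓝 0) :=
    squeeze_zero_norm hAu tendsto_one_div_add_atTop_nhds_zero_nat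
  obtain ⟨φ, hφ, x, hx⟩ := hA u ⟨1, fun n => (hu n).le⟩ ⟨0, hAu0⟩
  have hAx : A x = 0 :=
    tendsto_nhds_unique ((A.continuous.tendsto x).comp hx) (hAu0.comp hφ.tendsto_atTop)
  have hx0 : x = 0 := hinj (by rw [hAx, map_zero])
  have hnorm : Tendsto (fun n => ‖u (φ n)‖) atTop (𝓝 ‖x‖) := hx.norm
  simp only [hu, hx0, norm_zero] at hnorm
  exact one_ne_zero (tendsto_nhds_unique tendsto_const_nhds hnorm)

theorem exists_tendsto_subseq_of_hasFiniteRange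
    (hF : (F : X →ₗ[𝕜] Y).HasFiniteRange) {u : ℕ → X} {M : ℝ} (hu : ∀ n, ‖u n‖ ≤ M) :
    ∃ φ : ℕ → ℕ, StrictMono φ ∧ ∃ y, Tendsto (fun n => F (u (φ n))) atTop (𝓝 y) := by
  have : FiniteDimensional 𝕜 (F : X →ₗ[𝕜] Y).range := Module.Finite.of_fg hF.fg_range
  have : ProperSpace (F : X →ₗ[𝕜] Y).range := FiniteDimensional.proper 𝕜 _
  let v : ℕ → (F : X →ₗ[𝕜] Y).range := fun n => ⟨F (u n), u n, rfl⟩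
  have hv : ∀ n, v n ∈ Metric.closedBall 0 (‖F‖ * M) := fun n =>
    mem_closedBall_zero_iff.2 (F.le_opNorm_of_le (hu n))
  obtain ⟨y, -, φ, hφ, hy⟩ := (isCompact_closedBall _ _).tendsto_subseq hv
  exact ⟨φ, hφ, y, (continuous_subtype_val.tendsto y).comp hy⟩

theorem IsUpperSemiFredholm.add_hasFiniteRange (hA : IsUpperSemiFredholm A)
    (hF : (F : X →ₗ[𝕜] Y).HasFiniteRange) : IsUpperSemiFredholm (A + F) := by
  rintro u ⟨M, hM⟩ ⟨y, hy⟩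
  obtain ⟨φ, hφ, z, hz⟩ := exists_tendsto_subseq_of_hasFiniteRange hF hM
  have hA' : Tendsto (fun n => A (u (φ n))) atTop (𝓝 (y - z)) := by
    simpa using (hy.comp hφ.tendsto_atTop).sub hz
  obtain ⟨ψ, hψ, x, hx⟩ := hA (u ∘ φ) ⟨M, fun n => hM _⟩ ⟨y - z, hA'⟩
  exact ⟨φ ∘ ψ, hφ.comp hψ, x, hx⟩

theorem IsUpperSemiFredholm.finiteDimensional_ker (hA : IsUpperSemiFredholm A) :
    FiniteDimensional 𝕜 (A : X →ₗ[𝕜] Y).ker := by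
  apply FiniteDimensional.of_isCompact_closedBall 𝕜 (r := 1) one_pos (c := 0)
  rw [isCompact_iff_isSeqCompact]
  intro u hu
  have hAu : ∀ n, A (u n) = 0 := fun n => (u n).2
  obtain ⟨φ, hφ, x, hx⟩ := hA (fun n => (u n : X)) ⟨1, fun n => mem_closedBall_zero_iff.1 (hu n)⟩
    ⟨0, by simp only [hAu, tendsto_const_nhds]⟩
  have hAx : A x = 0 := by
    refine tendsto_nhds_unique ((A.continuous.tendsto x).comp hx) ?_
    simp only [Function.comp_def, hAu, tendsto_const_nhds]
  have hlim : Tendsto (u ∘ φ) atTop (𝓝 ⟨x, hAx⟩) := tendsto_subtype_rng.2 hx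
  exact ⟨⟨x, hAx⟩, Metric.isClosed_closedBall.mem_of_tendsto hlim (.of_forall fun n => hu _),
    φ, hφ, hlim⟩

theorem exists_hasFiniteRange_injective_or_surjective_add
    (hker : FiniteDimensional 𝕜 (A : X →ₗ[𝕜] Y).ker) :
    ∃ F : X →L[𝕜] Y, (F : X →ₗ[𝕜] Y).HasFiniteRange ∧
      (Function.Injective (A + F) ∨ Function.Surjective (A + F)) := by
  let N := (A : X →ₗ[𝕜] Y).ker
  let R := (A : X →ₗ[𝕜] Y).range
  obtain ⟨π, hπ⟩ := Submodule.ClosedComplemented.of_finiteDimensional N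
  obtain ⟨j, hj⟩ := exists_linearMap_injective_or_surjective 𝕜 N (Y ⧸ R)
  obtain ⟨s, hs⟩ := R.mkQ.exists_rightInverse_of_surjective R.range_mkQ
  have hs : ∀ w, R.mkQ (s w) = w := LinearMap.congr_fun hs
  let F : X →L[𝕜] Y := LinearMap.toContinuousLinearMap (s ∘ₗ j) ∘L π
  have hFx : ∀ x, F x = s (j (π x)) := fun x => rfl
  have hquot : ∀ x, R.mkQ ((A + F) x) = j (π x) := fun x => by
    have hAx : R.mkQ (A x) = 0 := (Submodule.Quotient.mk_eq_zero R).2 ⟨x, rfl⟩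
    rw [add_apply, map_add, hAx, zero_add, hFx, hs]
  have hF : (F : X →ₗ[𝕜] Y).HasFiniteRange :=
    LinearMap.HasFiniteRange.comp_right (v := s ∘ₗ j) (by simp) (π : X →ₗ[𝕜] N)
  refine ⟨F, hF, hj.imp ?_ ?_⟩
  · intro hj
    refine (injective_iff_map_eq_zero (A + F)).2 fun x hx => ?_
    have hπx : π x = 0 := hj (by rw [← hquot, hx, map_zero, map_zero])
    have hAx : A x = 0 := by
      simpa only [add_apply, hFx, hπx, map_zero, add_zero] using hx
    simpa [hπx] using (congrArg Subtype.val (hπ ⟨x, hAx⟩)).symm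
  · intro hj y
    obtain ⟨n, hn⟩ := hj (R.mkQ y)
    obtain ⟨z, hz⟩ : y - s (j n) ∈ R := by
      rw [← Submodule.Quotient.mk_eq_zero, ← Submodule.mkQ_apply, map_sub, hs, hn, sub_self]
    have hz : A z = y - s (j n) := hz
    have hAn : ∀ m : N, A m = 0 := fun m => m.2
    exact ⟨z - π z + n, by simp [hFx, hπ, hAn, hz]⟩

theorem IsUpperSemiFredholm.exists_hasFiniteRange_add (hA : IsUpperSemiFredholm A) :
    ∃ F : X →L[𝕜] Y, (F : X →ₗ[𝕜] Y).HasFiniteRange ∧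
      ((∃ K, AntilipschitzWith K (A + F)) ∨ Function.Surjective (A + F)) := by
  obtain ⟨F, hF, h⟩ := exists_hasFiniteRange_injective_or_surjective_add hA.finiteDimensional_ker
  exact ⟨F, hF, h.imp_left (hA.add_hasFiniteRange hF).exists_antilipschitzWith⟩

-- Finite-rank translates of the two open sets of operators above separate `S`: this replaces the
-- continuity of the Fredholm index, which may be `-∞` here.
theorem surjective_of_isPreconnected_of_isUpperSemiFredholm [CompleteSpace X] [CompleteSpace Y]
    {S : Set (X →L[𝕜] Y)} (hS : IsPreconnected S) (hfred : ∀ A ∈ S, IsUpperSemiFredholm A)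
    (hAS : A ∈ S) (hA : Function.Injective A) (hBS : B ∈ S) (hB : Function.Surjective B) :
    Function.Surjective A := by
  let finiteRankTranslates (U : Set (X →L[𝕜] Y)) : Set (X →L[𝕜] Y) :=
    ⋃ F ∈ {F : X →L[𝕜] Y | (F : X →ₗ[𝕜] Y).HasFiniteRange}, (· + F) ⁻¹' U
  have hopen {U : Set (X →L[𝕜] Y)} (hU : IsOpen U) : IsOpen (finiteRankTranslates U) :=
    isOpen_biUnion fun F _ => hU.preimage (continuous_add_const F)
  have hsub {U : Set (X →L[𝕜] Y)} {C : X →L[𝕜] Y} (hC : C ∈ U) : C ∈ finiteRankTranslates U :=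
    Set.mem_biUnion (x := 0) (by simp) (by simpa using hC)
  by_contra hAsurj
  have hAanti := (hfred A hAS).exists_antilipschitzWith hA
  have hcover : S ⊆ finiteRankTranslates {C | (∃ K, AntilipschitzWith K C) ∧
      ¬ Function.Surjective C} ∪ finiteRankTranslates {C | Function.Surjective C} := fun C hC => by
    obtain ⟨F, hF, h⟩ := (hfred C hC).exists_hasFiniteRange_add
    by_cases hs : Function.Surjective (C + F)
    · exact Or.inr (Set.mem_biUnion hF hs)
    · exact Or.inl (Set.mem_biUnion hF ⟨h.resolve_right hs, hs⟩)
  obtain ⟨C, -, hC₁, hC₂⟩ := hS _ _ (hopen isOpen_setOf_antilipschitzWith_not_surjective)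
    (hopen isOpen_setOf_surjective) hcover ⟨A, hAS, hsub ⟨hAanti, hAsurj⟩⟩ ⟨B, hBS, hsub hB⟩
  obtain ⟨F, hF, ⟨K, hK⟩, hCF⟩ := Set.mem_iUnion₂.1 hC₁
  obtain ⟨G, hG, hCG⟩ := Set.mem_iUnion₂.1 hC₂
  have hGF : ((C + F : X →L[𝕜] Y) : X →ₗ[𝕜] Y) + (G - F : X →L[𝕜] Y) = (C + G : X →L[𝕜] Y) := by
    rw [← ContinuousLinearMap.toLinearMap_add, add_add_sub_cancel]
  exact hCF <| surjective_of_injective_of_surjective_add (A := (C + F : X →L[𝕜] Y)) hK.injective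
    (LinearMap.HasFiniteRange.sub hG hF) (hGF ▸ hCG)

end UpperSemiFredholm

section ExhaustiveFamily

/-- A `[0, 1]`-valued continuous function of two reals that vanishes unless `a < k / N < b` and is
`1` when both gaps are at least `1 / (2 N)`. It detects that an increasing sequence crosses the
level `k / N` between its consecutive values `a` and `b`. -/
noncomputable def levelCrossing (N k : ℕ) (a b : ℝ) : ℝ :=
  min 1 (2 * N * min (max (b - k / N) 0) (max (k / N - a) 0))

theorem levelCrossing_nonneg (N k : ℕ) (a b : ℝ) : 0 ≤ levelCrossing N k a b := by
  unfold levelCrossing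
  positivity

theorem levelCrossing_le_one (N k : ℕ) (a b : ℝ) : levelCrossing N k a b ≤ 1 :=
  min_le_left _ _

theorem lt_and_lt_of_levelCrossing_ne_zero {N k : ℕ} {a b : ℝ} (h : levelCrossing N k a b ≠ 0) :
    a < k / N ∧ (k / N : ℝ) < b := by
  contrapose! h
  have hmin : min (max (b - k / N) 0) (max (k / N - a) 0) = (0 : ℝ) := by
    rcases lt_or_ge a (k / N) with ha | ha
    · rw [max_eq_right (sub_nonpos.2 (h ha)), min_eq_left (le_max_right _ _)]
    · rw [max_eq_right (sub_nonpos.2 ha), min_eq_right (le_max_right _ _)]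
  rw [levelCrossing, hmin, mul_zero, min_eq_right zero_le_one]

theorem levelCrossing_eq_one {N k : ℕ} (hN : 0 < N) {a b : ℝ} (ha : a * N + 1 / 2 ≤ k)
    (hb : k + 1 / 2 ≤ b * N) : levelCrossing N k a b = 1 := by
  have : (0 : ℝ) < N := Nat.cast_pos.2 hN
  have hle : 1 / (2 * N) ≤ min (max (b - k / N) 0) (max (k / N - a) 0) := by
    refine le_min (le_max_of_le_left ?_) (le_max_of_le_left ?_)
    · rw [div_le_iff₀ (by positivity)]
      field_simp
      linarith
    · rw [div_le_iff₀ (by positivity)]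
      field_simp
      linarith
  refine min_eq_left ?_
  calc (1 : ℝ) = 2 * N * (1 / (2 * N)) := by field_simp
    _ ≤ _ := by gcongr

theorem sub_le_two_div_add_sum_levelCrossing {N : ℕ} (hN : 0 < N) {a b : ℝ} (ha : 0 ≤ a)
    (hb : b ≤ 1) : b - a ≤ 2 / N + ∑ k ∈ Finset.range (N + 1), levelCrossing N k a b := by
  have hnonneg : ∀ k ∈ Finset.range (N + 1), 0 ≤ levelCrossing N k a b :=
    fun k _ => levelCrossing_nonneg N k a b
  have hN' : (0 : ℝ) < N := Nat.cast_pos.2 hN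
  rcases le_or_gt (b - a) (2 / N) with hab | hab
  · linarith [Finset.sum_nonneg hnonneg]
  rw [div_lt_iff₀ hN'] at hab
  let k := ⌈a * N + 1 / 2⌉₊
  have hk_ge : a * N + 1 / 2 ≤ k := Nat.le_ceil _
  have hk_lt : (k : ℝ) < a * N + 1 / 2 + 1 := Nat.ceil_lt_add_one (by positivity)
  have hkN : k < N + 1 := by
    have : (k : ℝ) < N + 1 := by nlinarith
    exact_mod_cast this
  have hone : levelCrossing N k a b = 1 := levelCrossing_eq_one hN hk_ge (by linarith)
  have hsum := Finset.single_le_sum hnonneg (Finset.mem_range.2 hkN)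
  rw [hone] at hsum
  have : (0 : ℝ) ≤ 2 / N := by positivity
  linarith

theorem levelCrossing_mul_levelCrossing_of_le (N k : ℕ) (a : ℝ) {b c : ℝ} (d : ℝ) (hbc : b ≤ c) :
    levelCrossing N k a b * levelCrossing N k c d = 0 := by
  by_contra h
  exact ((lt_and_lt_of_levelCrossing_ne_zero (left_ne_zero_of_mul h)).2.trans_le hbc).not_gt
    (lt_and_lt_of_levelCrossing_ne_zero (right_ne_zero_of_mul h)).1

variable {K : Type*} [TopologicalSpace K]

theorem posPart_sub_inf'_le_sum {α : Type*} {s : Finset α} (hs : s.Nonempty) (f : C(K, ℝ))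
    (h : α → C(K, ℝ)) : (f - s.inf' hs h)⁺ ≤ ∑ a ∈ s, (f - h a)⁺ := by
  intro y
  obtain ⟨a, ha, hay⟩ := s.exists_mem_eq_inf' hs fun a => h a y
  calc (f - s.inf' hs h)⁺ y = (f - h a)⁺ y := by
        simp [posPart_def, hay]
    _ ≤ (∑ a ∈ s, (f - h a)⁺) y :=
        Finset.single_le_sum (f := fun a => (f - h a)⁺) (fun a _ => posPart_nonneg _) ha y

variable [CompactSpace K] {ι : Type*}

/-- A family of monotone, sublinear functions on the positive cone of `C(K, ℝ)`, bounded by `M` on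
the unit ball, is *uniformly exhaustive* if it tends to `0` uniformly along every disjoint sequence
of functions with values in `[0, 1]`. -/
structure IsUniformlyExhaustive (p : ι → C(K, ℝ) → ℝ) (M : NNReal) : Prop where
  mono : ∀ i f g, 0 ≤ f → f ≤ g → p i f ≤ p i g
  add_le : ∀ i f g, 0 ≤ f → 0 ≤ g → p i (f + g) ≤ p i f + p i g
  smul : ∀ i (c : ℝ) f, 0 < c → 0 ≤ f → p i (c • f) = c * p i f
  le_mul_norm : ∀ i f, 0 ≤ f → p i f ≤ M * ‖f‖
  eventually_le : ∀ e : ℕ → C(K, ℝ), (∀ n, 0 ≤ e n) → (∀ n, e n ≤ 1) →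
    Pairwise (fun i j => e i * e j = 0) → ∀ η > 0, ∀ᶠ n in atTop, ∀ i, p i (e n) ≤ η

namespace IsUniformlyExhaustive

variable {p : ι → C(K, ℝ) → ℝ} {M : NNReal}

theorem nonneg (hp : IsUniformlyExhaustive p M) (i : ι) {f : C(K, ℝ)} (hf : 0 ≤ f) : 0 ≤ p i f := by
  have h := hp.add_le i 0 0 le_rfl le_rfl
  rw [add_zero] at h
  exact (le_add_iff_nonneg_left _).1 h |>.trans (hp.mono i 0 f le_rfl hf)

theorem sum_le (hp : IsUniformlyExhaustive p M) (i : ι) {α : Type*} (s : Finset α)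
    {f : α → C(K, ℝ)} (hf : ∀ a ∈ s, 0 ≤ f a) : p i (∑ a ∈ s, f a) ≤ ∑ a ∈ s, p i (f a) :=
  Finset.le_sum_of_subadditive_on_pred (p i) (0 ≤ ·) (by simpa using hp.le_mul_norm i 0 le_rfl)
    (hp.add_le i) (fun _ _ => add_nonneg) f hf

theorem eventually_sum_le (hp : IsUniformlyExhaustive p M) {α : Type*} (s : Finset α)
    {e : α → ℕ → C(K, ℝ)} (e0 : ∀ a n, 0 ≤ e a n) (e1 : ∀ a n, e a n ≤ 1)
    (hdisj : ∀ a, Pairwise fun i j => e a i * e a j = 0) {η : ℝ} (hη : 0 < η) :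
    ∀ᶠ n in atTop, ∀ i, p i (∑ a ∈ s, e a n) ≤ η := by
  have hsmall : ∀ᶠ n in atTop, ∀ a ∈ s, ∀ i, p i (e a n) ≤ η / (s.card + 1) :=
    (Filter.eventually_all_finset s).2 fun a _ =>
      hp.eventually_le (e a) (e0 a) (e1 a) (hdisj a) _ (by positivity)
  filter_upwards [hsmall] with n hn i
  calc p i (∑ a ∈ s, e a n) ≤ ∑ a ∈ s, p i (e a n) := hp.sum_le i s fun a _ => e0 a n
    _ ≤ s.card • (η / (s.card + 1)) := Finset.sum_le_card_nsmul s _ _ fun a ha => hn a ha i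
    _ ≤ η := by
      rw [nsmul_eq_mul, mul_div_left_comm]
      exact mul_le_of_le_one_right hη.le (div_le_one_of_le₀ (by linarith) (by positivity))

theorem le_add_posPart_sub (hp : IsUniformlyExhaustive p M) (i : ι) {f g : C(K, ℝ)} (hf : 0 ≤ f)
    (hg : 0 ≤ g) : p i f ≤ p i g + p i (f - g)⁺ :=
  (hp.mono i f _ hf (sub_le_iff_le_add'.1 (le_posPart (f - g)))).trans
    (hp.add_le i _ _ hg (posPart_nonneg _))

theorem eventually_sub_le_of_monotone (hp : IsUniformlyExhaustive p M) {h : ℕ → C(K, ℝ)}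
    (hmono : Monotone h) (h0 : ∀ n, 0 ≤ h n) (h1 : ∀ n, h n ≤ 1) {η : ℝ} (hη : 0 < η) :
    ∀ᶠ n in atTop, ∀ i, p i (h (n + 1) - h n) ≤ η := by
  obtain ⟨N, hN⟩ := exists_nat_gt (4 * M / η)
  have hN' : (0 : ℝ) < N := hN.trans_le' (by positivity)
  let c (k n : ℕ) : C(K, ℝ) :=
    ⟨fun y => levelCrossing N k (h n y) (h (n + 1) y), by unfold levelCrossing; fun_prop⟩
  have hc0 : ∀ k n, 0 ≤ c k n := fun k n y => levelCrossing_nonneg ..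
  have hdisj : ∀ k, Pairwise fun i j => c k i * c k j = 0 := fun k i j hij => by
    ext y
    rcases hij.lt_or_gt with hlt | hlt
    · exact levelCrossing_mul_levelCrossing_of_le _ _ _ _ (hmono hlt y)
    · exact (mul_comm _ _).trans (levelCrossing_mul_levelCrossing_of_le _ _ _ _ (hmono hlt y))
  filter_upwards [hp.eventually_sum_le (Finset.range (N + 1)) hc0
    (fun k n y => levelCrossing_le_one ..) hdisj (half_pos hη)] with n hn i
  let d : C(K, ℝ) := ContinuousMap.const K (2 / N)
  have hd0 : 0 ≤ d := fun y => by change (0 : ℝ) ≤ 2 / N; positivity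
  have hd : p i d ≤ η / 2 := by
    have hnorm : ‖d‖ ≤ 2 / N := (ContinuousMap.norm_le _ (by positivity)).2 fun y =>
      (Real.norm_of_nonneg (hd0 y)).le
    rw [div_lt_iff₀ hη] at hN
    calc p i d ≤ M * (2 / N) := (hp.le_mul_norm i d hd0).trans (by gcongr)
      _ ≤ η / 2 := by rw [mul_div_assoc', div_le_iff₀ hN']; linarith
  have hsum0 : 0 ≤ ∑ k ∈ Finset.range (N + 1), c k n := Finset.sum_nonneg fun k _ => hc0 k n
  calc p i (h (n + 1) - h n)
      ≤ p i (d + ∑ k ∈ Finset.range (N + 1), c k n) := by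
        refine hp.mono i _ _ (sub_nonneg.2 (hmono n.le_succ)) fun y => ?_
        simpa [d, c] using
          sub_le_two_div_add_sum_levelCrossing (Nat.cast_pos.1 hN') (h0 n y) (h1 (n + 1) y)
    _ ≤ p i d + p i (∑ k ∈ Finset.range (N + 1), c k n) := hp.add_le i _ _ hd0 hsum0
    _ ≤ η / 2 + η / 2 := add_le_add hd (hn i)
    _ = η := add_halves η

theorem exists_forall_sub_le_of_monotone (hp : IsUniformlyExhaustive p M) {h : ℕ → C(K, ℝ)}
    (hmono : Monotone h) (h0 : ∀ n, 0 ≤ h n) (h1 : ∀ n, h n ≤ 1) {η : ℝ} (hη : 0 < η) :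
    ∃ n, ∀ m, n ≤ m → ∀ i, p i (h m - h n) ≤ η := by
  by_contra! hcon
  choose next hnext i hi using hcon
  let φ : ℕ → ℕ := fun k => next^[k] 0
  have hφsucc : ∀ k, φ (k + 1) = next (φ k) := fun k => Function.iterate_succ_apply' next k 0
  have hφ : Monotone φ := monotone_nat_of_le_succ fun k => hφsucc k ▸ hnext _
  obtain ⟨k, hk⟩ := (hp.eventually_sub_le_of_monotone (hmono.comp hφ) (fun n => h0 _)
    (fun n => h1 _) hη).exists
  refine (hi (φ k)).not_ge ?_
  simpa only [Function.comp_apply, hφsucc] using hk (i (φ k))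

theorem exists_forall_sub_le_of_antitone (hp : IsUniformlyExhaustive p M) {h : ℕ → C(K, ℝ)}
    (hanti : Antitone h) (h0 : ∀ n, 0 ≤ h n) (h1 : ∀ n, h n ≤ 1) {η : ℝ} (hη : 0 < η) :
    ∃ n, ∀ m, n ≤ m → ∀ i, p i (h n - h m) ≤ η := by
  simpa using hp.exists_forall_sub_le_of_monotone (h := fun n => 1 - h n)
    (fun a b hab => sub_le_sub_left (hanti hab) 1) (fun n => sub_nonneg.2 (h1 n))
    (fun n => sub_le_self _ (h0 n)) hη

/-- The function `h` plays the role of the supremum of the sequence, which need not exist in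
`C(K, ℝ)`. -/
theorem exists_almost_sup (hp : IsUniformlyExhaustive p M) {f : ℕ → C(K, ℝ)}
    (f0 : ∀ n, 0 ≤ f n) (f1 : ∀ n, f n ≤ 1) {η : ℝ} (hη : 0 < η) :
    ∃ h : C(K, ℝ), 0 ≤ h ∧ h ≤ 1 ∧ (∃ m, h ≤ ∑ k ∈ Finset.range m, f k) ∧
      ∀ k i, p i (f k - h)⁺ ≤ η := by
  let S := partialSups f
  have hfS : ∀ k, f k ≤ S k := le_partialSups f
  have hS0 : ∀ k, 0 ≤ S k := fun k => (f0 k).trans (hfS k)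
  have hS1 : ∀ k, S k ≤ 1 := fun k => partialSups_le _ _ _ fun j _ => f1 j
  obtain ⟨m, hm⟩ := hp.exists_forall_sub_le_of_monotone S.monotone hS0 hS1 hη
  refine ⟨S m, hS0 m, hS1 m, ⟨m + 1, partialSups_le _ _ _ fun j hj =>
    Finset.single_le_sum (fun k _ => f0 k) (Finset.mem_range_succ_iff.2 hj)⟩, fun k i => ?_⟩
  refine (hp.mono i _ _ (posPart_nonneg _) ?_).trans (hm (max m k) (le_max_left _ _) i)
  exact sup_le (sub_le_sub_right ((hfS k).trans (S.monotone (le_max_right _ _))) _)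
    (sub_nonneg.2 (S.monotone (le_max_left _ _)))

theorem exists_antitone_almost_tail_sup (hp : IsUniformlyExhaustive p M) {f : ℕ → C(K, ℝ)}
    (f0 : ∀ n, 0 ≤ f n) (f1 : ∀ n, f n ≤ 1) {η : ℕ → ℝ} (hη : ∀ n, 0 < η n) :
    ∃ G : ℕ → C(K, ℝ), Antitone G ∧ (∀ n, 0 ≤ G n) ∧ (∀ n, G n ≤ 1) ∧
      (∀ n, ∃ m, G n ≤ ∑ k ∈ Finset.range m, f (n + k)) ∧
      ∀ n k, n ≤ k → ∀ i, p i (f k - G n)⁺ ≤ ∑ j ∈ Finset.range (n + 1), η j := by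
  choose h h0 h1 hsum hle using fun n =>
    hp.exists_almost_sup (fun k => f0 (n + k)) (fun k => f1 (n + k)) (hη n)
  let G (n : ℕ) : C(K, ℝ) := (Finset.range (n + 1)).inf' Finset.nonempty_range_add_one h
  have hGh : ∀ n, G n ≤ h n := fun n => Finset.inf'_le h (Finset.self_mem_range_succ n)
  refine ⟨G, fun a b hab => Finset.inf'_mono h (Finset.range_mono (by lia)) _,
    fun n => Finset.le_inf' _ _ fun j _ => h0 j, fun n => (hGh n).trans (h1 n),
    fun n => (hsum n).imp fun m hm => (hGh n).trans hm, fun n k hnk i => ?_⟩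
  calc p i (f k - G n)⁺
      ≤ p i (∑ j ∈ Finset.range (n + 1), (f k - h j)⁺) :=
        hp.mono i _ _ (posPart_nonneg _) (posPart_sub_inf'_le_sum _ _ _)
    _ ≤ ∑ j ∈ Finset.range (n + 1), p i (f k - h j)⁺ :=
        hp.sum_le i _ fun j _ => posPart_nonneg _
    _ ≤ ∑ j ∈ Finset.range (n + 1), η j := Finset.sum_le_sum fun j hj => by
        simpa [Nat.add_sub_cancel' ((Finset.mem_range_succ_iff.1 hj).trans hnk)] using
          hle j (k - j) i

theorem exists_le_of_forall_lt_le (hp : IsUniformlyExhaustive p M) {ε : ℝ} (hε : 0 < ε)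
    {f : ℕ → C(K, ℝ)} (f0 : ∀ n, 0 ≤ f n) (f1 : ∀ n, f n ≤ 1) (i : ℕ → ι)
    (hsmall : ∀ j n, j < n → p (i j) (f n) ≤ ε / 8 * (1 / 2) ^ n) :
    ∃ n, p (i n) (f n) ≤ ε := by
  have geom : ∀ n, ∑ j ∈ Finset.range n, ε / 8 * (1 / 2 : ℝ) ^ j ≤ ε / 4 := fun n => by
    rw [← Finset.mul_sum]
    nlinarith [sum_geometric_two_le n]
  obtain ⟨G, hanti, hG0, hG1, hGsum, hGpos⟩ := hp.exists_antitone_almost_tail_sup f0 f1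
    (η := fun n => ε / 8 * (1 / 2) ^ n) fun n => by positivity
  obtain ⟨n, hn⟩ := hp.exists_forall_sub_le_of_antitone hanti hG0 hG1 (by positivity : 0 < ε / 4)
  have hGsucc : p (i n) (G (n + 1)) ≤ ε / 4 := by
    obtain ⟨m, hm⟩ := hGsum (n + 1)
    calc p (i n) (G (n + 1)) ≤ p (i n) (∑ k ∈ Finset.range m, f (n + 1 + k)) :=
          hp.mono _ _ _ (hG0 _) hm
      _ ≤ ∑ k ∈ Finset.range m, p (i n) (f (n + 1 + k)) := hp.sum_le _ _ fun k _ => f0 _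
      _ ≤ ∑ k ∈ Finset.range m, ε / 8 * (1 / 2) ^ k := Finset.sum_le_sum fun k _ =>
          (hsmall n _ (by lia)).trans (mul_le_mul_of_nonneg_left
            (pow_le_pow_of_le_one (by norm_num) (by norm_num) (by lia)) (by positivity))
      _ ≤ ε / 4 := geom m
  refine ⟨n, ?_⟩
  have hGdiff := hp.add_le (i n) (G n - G (n + 1)) (G (n + 1)) (sub_nonneg.2 (hanti n.le_succ))
    (hG0 _)
  rw [sub_add_cancel] at hGdiff
  linarith [hp.le_add_posPart_sub (i n) (f0 n) (hG0 n), (hGpos n n le_rfl (i n)).trans (geom _),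
    hn (n + 1) n.le_succ (i n)]

theorem exists_finset_control (hp : IsUniformlyExhaustive p M) {ε : ℝ} (hε : 0 < ε) :
    ∃ (F : Finset ι) (δ : ℝ), 0 < δ ∧ ∀ f : C(K, ℝ), 0 ≤ f → f ≤ 1 →
      (∀ j ∈ F, p j f ≤ δ) → ∀ i, p i f ≤ ε := by
  classical
  by_contra! hcon
  obtain ⟨u, hu, hsmall⟩ := exists_seq_of_forall_finset_exists
    (fun x : ℕ × ι × C(K, ℝ) => 0 ≤ x.2.2 ∧ x.2.2 ≤ 1 ∧ ε < p x.2.1 x.2.2)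
    (fun x y => x.1 < y.1 ∧ p x.2.1 y.2.2 ≤ ε / 8 * (1 / 2) ^ y.1) fun s _ => by
      obtain ⟨f, f0, f1, hsmall, i, hi⟩ := hcon (s.image fun x => x.2.1)
        (ε / 8 * (1 / 2) ^ (s.sup Prod.fst + 1)) (by positivity)
      exact ⟨(s.sup Prod.fst + 1, i, f), ⟨f0, f1, hi⟩, fun x hx =>
        ⟨Nat.lt_succ_of_le (Finset.le_sup (f := Prod.fst) hx),
          hsmall _ (Finset.mem_image_of_mem _ hx)⟩⟩
  have hmono : StrictMono fun n => (u n).1 := fun m n hmn => (hsmall m n hmn).1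
  obtain ⟨n, hn⟩ := hp.exists_le_of_forall_lt_le hε (fun n => (hu n).1) (fun n => (hu n).2.1)
    (fun n => (u n).2.1) fun j n hjn => (hsmall j n hjn).2.trans (mul_le_mul_of_nonneg_left
      (pow_le_pow_of_le_one (by norm_num) (by norm_num) hmono.le_apply) (by positivity))
  exact hn.not_gt (hu n).2.2

theorem exists_finset_le_mul_sum_add (hp : IsUniformlyExhaustive p M) {ε : ℝ} (hε : 0 < ε) :
    ∃ (F : Finset ι) (C : ℝ), 0 ≤ C ∧
      ∀ i f, 0 ≤ f → p i f ≤ C * ∑ j ∈ F, p j f + ε * ‖f‖ := by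
  obtain ⟨F, δ, hδ, hF⟩ := hp.exists_finset_control hε
  refine ⟨F, ε / δ, by positivity, fun i f hf => ?_⟩
  let s := ∑ j ∈ F, p j f
  have hs : ∀ j ∈ F, p j f ≤ s := fun j hj =>
    Finset.single_le_sum (f := fun j => p j f) (fun j _ => hp.nonneg j hf) hj
  have hs0 : 0 ≤ s := Finset.sum_nonneg fun j _ => hp.nonneg j hf
  -- Rescaling by any `c` slightly larger than `‖f‖ + s / δ` puts `f` in the range of `hF`.
  have hscaled : ∀ c, ‖f‖ + s / δ < c → p i f ≤ ε * c := fun c hc => by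
    have hc0 : 0 < c := hc.trans_le' (by positivity)
    have hsδ : 0 ≤ s / δ := by positivity
    have h := hF (c⁻¹ • f) (smul_nonneg (by positivity) hf)
      (fun y => by
        change c⁻¹ * f y ≤ 1
        rw [inv_mul_le_iff₀ hc0]
        linarith [f.apply_le_norm y])
      (fun j hj => by
        rw [hp.smul j _ f (by positivity) hf, inv_mul_le_iff₀ hc0]
        have hsc : s ≤ c * δ := by rw [← div_le_iff₀ hδ]; linarith [norm_nonneg f]
        exact (hs j hj).trans hsc) i
    rwa [hp.smul i _ f (by positivity) hf, inv_mul_le_iff₀ hc0, mul_comm] at h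
  calc p i f ≤ ε * (‖f‖ + s / δ) :=
        ge_of_tendsto (((continuous_const_mul ε).tendsto _).mono_left nhdsWithin_le_nhds)
          (eventually_mem_nhdsWithin.mono hscaled : ∀ᶠ c in 𝓝[>] (‖f‖ + s / δ), _)
    _ = ε / δ * s + ε * ‖f‖ := by ring

end IsUniformlyExhaustive

end ExhaustiveFamily

section OffDiagonalVariation

theorem exists_add_eq_of_abs_le_add {α : Type*} [AddCommGroup α] [Lattice α] [IsOrderedAddMonoid α]
    {f g h : α} (hf : 0 ≤ f) (hg : 0 ≤ g) (hh : |h| ≤ f + g) :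
    ∃ a b, a + b = h ∧ |a| ≤ f ∧ |b| ≤ g ∧ |a| ≤ |h| := by
  have hle : h ≤ f + g := (le_abs_self h).trans hh
  have hneg : -h ≤ f + g := (neg_le_abs h).trans hh
  have hf' : -f ≤ 0 := neg_nonpos.2 hf
  refine ⟨-f ⊔ f ⊓ h, h - (-f ⊔ f ⊓ h), add_sub_cancel _ _, sup_le ?_ ?_, sup_le ?_ ?_,
    sup_le ?_ ?_⟩
  · exact sup_le (hf'.trans hf) inf_le_left
  · exact neg_le.2 le_sup_left
  · rw [sub_le_comm]
    exact le_sup_of_le_right (le_inf (sub_le_iff_le_add.2 hle) (sub_le_self h hg))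
  · rw [neg_sub, sub_le_iff_le_add]
    refine sup_le ?_ (inf_le_right.trans (le_add_of_nonneg_left hg))
    rw [neg_le_iff_add_nonneg', ← add_assoc]
    exact neg_le_iff_add_nonneg.1 (by simpa using hneg)
  · exact sup_le (hf'.trans (abs_nonneg h)) (inf_le_right.trans (le_abs_self h))
  · rw [neg_le]
    exact le_sup_of_le_right
      (le_inf ((neg_nonpos.2 (abs_nonneg h)).trans hf) (neg_le.2 (neg_le_abs h)))

variable {K : Type*} [TopologicalSpace K]

/-- The total variation at `f ≥ 0` of the part of the functional `φ` that lives off the point `x`: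
if `φ` is integration against a signed measure `σ`, this is `∫ f d|σ|` over `K \ {x}`. -/
noncomputable def offDiagVariation (φ : C(K, ℝ) →L[ℝ] ℝ) (x : K) (f : C(K, ℝ)) : ℝ :=
  sSup (φ '' {h | |h| ≤ f ∧ h x = 0})

variable {φ : C(K, ℝ) →L[ℝ] ℝ} {x : K} {f g h : C(K, ℝ)}

theorem offDiagVariation_le (hf : 0 ≤ f) {c : ℝ} (hc : ∀ h, |h| ≤ f → h x = 0 → φ h ≤ c) :
    offDiagVariation φ x f ≤ c :=
  csSup_le ⟨φ 0, 0, ⟨by simpa using hf, rfl⟩, rfl⟩ (by rintro _ ⟨k, hk, rfl⟩; exact hc k hk.1 hk.2)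

theorem exists_lt_of_lt_offDiagVariation (hf : 0 ≤ f) {c : ℝ} (hc : c < offDiagVariation φ x f) :
    ∃ h, |h| ≤ f ∧ h x = 0 ∧ c < φ h := by
  contrapose! hc
  exact offDiagVariation_le hf hc

theorem mul_eq_zero_of_abs_le {h' f' : C(K, ℝ)} (hh : |h| ≤ f) (hh' : |h'| ≤ f') (hf : f * f' = 0) :
    h * h' = 0 := by
  ext y
  have hy : f y * f' y = 0 := DFunLike.congr_fun hf y
  rcases mul_eq_zero.1 hy with hy | hy
  · simp [abs_nonpos_iff.1 ((hh y).trans_eq hy)]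
  · simp [abs_nonpos_iff.1 ((hh' y).trans_eq hy)]

theorem abs_smul_eq (c : ℝ) (f : C(K, ℝ)) : |c • f| = |c| • |f| := by
  ext y
  simp [ContinuousMap.abs_apply, abs_mul]

open scoped Pointwise in
theorem offDiagVariation_smul {c : ℝ} (hc : 0 < c) (f : C(K, ℝ)) :
    offDiagVariation φ x (c • f) = c * offDiagVariation φ x f := by
  have himage : φ '' {h | |h| ≤ c • f ∧ h x = 0} = c • φ '' {h | |h| ≤ f ∧ h x = 0} := by
    rw [← Set.image_smul_comm φ c _ (map_smul φ c)]
    congr 1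
    ext h
    simp [Set.mem_smul_set_iff_inv_smul_mem₀ hc.ne', abs_smul_eq, abs_of_pos hc,
      inv_smul_le_iff_of_pos hc, hc.ne']
  rw [offDiagVariation, himage, Real.sSup_smul_of_nonneg hc.le, smul_eq_mul, offDiagVariation]

variable [CompactSpace K]

instance hasSolidNorm_continuousMap : HasSolidNorm C(K, ℝ) where
  solid f g h := (ContinuousMap.norm_le _ (norm_nonneg _)).2 fun y => by
    have hy : |f y| ≤ |g y| := h y
    exact hy.trans (g.norm_coe_le_norm y)

theorem le_opNorm_mul_norm_of_abs_le (φ : C(K, ℝ) →L[ℝ] ℝ) (hh : |h| ≤ f) : φ h ≤ ‖φ‖ * ‖f‖ :=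
  (le_abs_self _).trans <| (φ.le_opNorm h).trans <| by
    gcongr
    exact norm_le_norm_of_abs_le_abs (hh.trans (le_abs_self f))

theorem le_offDiagVariation (hh : |h| ≤ f) (hx : h x = 0) : φ h ≤ offDiagVariation φ x f :=
  le_csSup ⟨‖φ‖ * ‖f‖, by rintro _ ⟨k, hk, rfl⟩; exact le_opNorm_mul_norm_of_abs_le φ hk.1⟩
    ⟨h, ⟨hh, hx⟩, rfl⟩

theorem offDiagVariation_mono (hf : 0 ≤ f) (hfg : f ≤ g) :
    offDiagVariation φ x f ≤ offDiagVariation φ x g :=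
  offDiagVariation_le hf fun _ hh hx => le_offDiagVariation (hh.trans hfg) hx

theorem offDiagVariation_le_opNorm_mul_norm (hf : 0 ≤ f) :
    offDiagVariation φ x f ≤ ‖φ‖ * ‖f‖ :=
  offDiagVariation_le hf fun _ hh _ => le_opNorm_mul_norm_of_abs_le φ hh

theorem offDiagVariation_add (hf : 0 ≤ f) (hg : 0 ≤ g) :
    offDiagVariation φ x (f + g) = offDiagVariation φ x f + offDiagVariation φ x g := by
  apply le_antisymm
  · refine offDiagVariation_le (add_nonneg hf hg) fun h hh hx => ?_
    obtain ⟨a, b, rfl, ha, hb, hah⟩ := exists_add_eq_of_abs_le_add hf hg hh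
    have hax : a x = 0 := abs_nonpos_iff.1 ((hah x).trans_eq (abs_eq_zero.2 hx))
    have hbx : b x = 0 := by simpa [hax] using hx
    rw [map_add]
    exact add_le_add (le_offDiagVariation ha hax) (le_offDiagVariation hb hbx)
  · rw [← le_sub_iff_add_le]
    refine offDiagVariation_le hf fun h hh hx => ?_
    rw [le_sub_comm]
    refine offDiagVariation_le hg fun k hk kx => ?_
    rw [le_sub_iff_add_le', ← map_add]
    exact le_offDiagVariation ((abs_add_le h k).trans (add_le_add hh hk)) (by simp [hx, kx])

/-- The extension of `φ` from the functions vanishing at `x` to all of `C(K, ℝ)` that is provided by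
the Hahn–Banach theorem is the part of `φ` living off `x`. -/
theorem exists_eq_mul_apply_add_offDiag (φ : C(K, ℝ) →L[ℝ] ℝ) (x : K) :
    ∃ (g : ℝ) (ν : C(K, ℝ) →ₗ[ℝ] ℝ), |g| ≤ 2 * (‖φ‖ * ‖(1 : C(K, ℝ))‖) ∧
      (∀ f, φ f = g * f x + ν f) ∧ ∀ f, |ν f| ≤ offDiagVariation φ x |f| := by
  let eval : C(K, ℝ) →ₗ[ℝ] ℝ := (ContinuousMap.evalCLM ℝ x).toLinearMap
  let φ₀ : C(K, ℝ) →ₗ.[ℝ] ℝ := ⟨eval.ker, φ.toLinearMap.domRestrict _⟩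
  obtain ⟨ν, hν_ext, hν_le⟩ := exists_extension_of_le_sublinear φ₀
    (fun f => offDiagVariation φ x |f|)
    (fun c hc f => by rw [abs_smul_eq, abs_of_pos hc, offDiagVariation_smul hc])
    (fun f g => by
      rw [← offDiagVariation_add (abs_nonneg f) (abs_nonneg g)]
      exact offDiagVariation_mono (abs_nonneg _) (abs_add_le f g))
    (fun f => le_offDiagVariation le_rfl f.2)
  have hν_abs : ∀ f, |ν f| ≤ offDiagVariation φ x |f| := fun f =>
    abs_le'.2 ⟨hν_le f, by simpa using hν_le (-f)⟩
  have hν_eq : ∀ f : C(K, ℝ), f x = 0 → ν f = φ f := fun f hf => hν_ext ⟨f, hf⟩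
  refine ⟨φ 1 - ν 1, ν, ?_, fun f => ?_, hν_abs⟩
  · have hφ1 : |φ 1| ≤ ‖φ‖ * ‖(1 : C(K, ℝ))‖ := φ.le_opNorm 1
    have hν1 := (hν_abs 1).trans (offDiagVariation_le_opNorm_mul_norm (abs_nonneg 1))
    rw [norm_abs_eq_norm] at hν1
    linarith [abs_sub (φ 1) (ν 1)]
  · have h := hν_eq (f - f x • 1) (by simp)
    simp only [map_sub, map_smul, smul_eq_mul] at h
    linarith

theorem norm_evalCLM_comp_le (T : C(K, ℝ) →L[ℝ] C(K, ℝ)) (x : K) :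
    ‖(ContinuousMap.evalCLM ℝ x).comp T‖ ≤ ‖T‖ :=
  ContinuousLinearMap.opNorm_le_bound _ (norm_nonneg T) fun f =>
    ((T f).norm_coe_le_norm x).trans (T.le_opNorm f)

theorem IsWeakMultiplier.isUniformlyExhaustive {T : C(K, ℝ) →L[ℝ] C(K, ℝ)}
    (hT : IsWeakMultiplier T) :
    IsUniformlyExhaustive
      (fun x => offDiagVariation ((ContinuousMap.evalCLM ℝ x).comp T) x) ‖T‖₊ where
  mono _ _ _ := offDiagVariation_mono
  add_le _ _ _ hf hg := (offDiagVariation_add hf hg).le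
  smul _ _ _ hc _ := offDiagVariation_smul hc _
  le_mul_norm x f hf := (offDiagVariation_le_opNorm_mul_norm hf).trans <| by
    gcongr
    exact norm_evalCLM_comp_le T x
  eventually_le e e0 e1 hdisj η hη := by
    by_contra hfreq
    obtain ⟨φ, hφ, hlarge⟩ := extraction_of_frequently_atTop (not_eventually.1 hfreq)
    push Not at hlarge
    choose x hx using hlarge
    choose h hh hhx hlt using fun n => exists_lt_of_lt_offDiagVariation (e0 (φ n)) (hx n)
    have htendsto := hT h x
      ⟨‖(1 : C(K, ℝ))‖, fun n => norm_le_norm_of_abs_le_abs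
        (((hh n).trans (e1 _)).trans (le_abs_self 1))⟩
      (fun i j hij => mul_eq_zero_of_abs_le (hh i) (hh j) (hdisj (hφ.injective.ne hij))) hhx
    exact hη.not_ge (ge_of_tendsto' htendsto fun n => (hlt n).le)

end OffDiagonalVariation

section ControlMeasure

open MeasureTheory
open scoped NNReal ENNReal CompactlySupported

theorem exists_isFiniteMeasure_forall_le_smul {α : Type*} [MeasurableSpace α]
    (μ : ℕ → Measure α) [∀ n, IsFiniteMeasure (μ n)] :
    ∃ ν : Measure α, IsFiniteMeasure ν ∧ ∀ n, ∃ C : ℝ≥0, μ n ≤ C • ν := by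
  obtain ⟨δ, hδ, hδsum⟩ := ENNReal.exists_pos_sum_of_countable one_ne_zero ℕ
  let c (n : ℕ) : ℝ≥0 := δ n / (measureUnivNNReal (μ n) + 1)
  have hc : ∀ n, 0 < c n := fun n => div_pos (hδ n) (by positivity)
  refine ⟨Measure.sum fun n => c n • μ n, ⟨?_⟩, fun n => ⟨(c n)⁻¹, ?_⟩⟩
  · rw [Measure.sum_apply _ MeasurableSet.univ]
    refine (ENNReal.tsum_le_tsum fun n => ?_).trans_lt (hδsum.trans ENNReal.one_lt_top)
    rw [Measure.smul_apply, ENNReal.smul_def, smul_eq_mul, ← coe_measureUnivNNReal,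
      ← ENNReal.coe_mul, ENNReal.coe_le_coe, div_mul_eq_mul_div]
    exact div_le_of_le_mul₀ (by positivity) (by positivity) (by gcongr; simp)
  · calc μ n = (c n)⁻¹ • c n • μ n := by rw [smul_smul, inv_mul_cancel₀ (hc n).ne', one_smul]
      _ ≤ (c n)⁻¹ • Measure.sum fun n => c n • μ n := by
        gcongr
        exact Measure.le_sum (fun n => c n • μ n) n

variable {K : Type*} [TopologicalSpace K] [CompactSpace K] [T2Space K] [MeasurableSpace K]
  [BorelSpace K]

theorem exists_eq_integral_of_add_of_smul {q : C(K, ℝ) → ℝ} (nonneg : ∀ f, 0 ≤ f → 0 ≤ q f)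
    (add : ∀ f g, 0 ≤ f → 0 ≤ g → q (f + g) = q f + q g)
    (smul : ∀ (c : ℝ) f, 0 < c → 0 ≤ f → q (c • f) = c * q f) :
    ∃ μ : Measure K, IsFiniteMeasure μ ∧ ∀ f, 0 ≤ f → q f = ∫ y, f y ∂μ := by
  let toReal (f : C_c(K, ℝ≥0)) : C(K, ℝ) := ⟨fun y => f y, by fun_prop⟩
  have toReal_nonneg : ∀ f, 0 ≤ toReal f := fun f y => (f y).2
  have q_zero : q 0 = 0 := by simpa using add 0 0 le_rfl le_rfl
  let Λ : C_c(K, ℝ≥0) →ₗ[ℝ≥0] ℝ≥0 :=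
    { toFun := fun f => ⟨q (toReal f), nonneg _ (toReal_nonneg f)⟩
      map_add' := fun f g => NNReal.eq (add _ _ (toReal_nonneg f) (toReal_nonneg g))
      map_smul' := fun c f => NNReal.eq <| by
        change q ((c : ℝ) • toReal f) = c * q (toReal f)
        rcases eq_zero_or_pos c with rfl | hc
        · rw [NNReal.coe_zero, zero_smul, zero_mul, q_zero]
        · exact smul c _ hc (toReal_nonneg f) }
  refine ⟨NNRealRMK.rieszMeasure Λ, inferInstance, fun f hf => ?_⟩
  let g : C_c(K, ℝ≥0) :=
    ⟨⟨fun y => (f y).toNNReal, by fun_prop⟩, HasCompactSupport.of_compactSpace _⟩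
  have hgf : toReal g = f := ContinuousMap.ext fun y => Real.coe_toNNReal _ (hf y)
  calc q f = Λ g := by rw [← hgf]; rfl
    _ = ∫ y, (g y : ℝ) ∂NNRealRMK.rieszMeasure Λ := (NNRealRMK.integral_rieszMeasure Λ g).symm
    _ = ∫ y, f y ∂NNRealRMK.rieszMeasure Λ := by rw [← hgf]; rfl

theorem IsUniformlyExhaustive.exists_controlMeasure {ι : Type*} {p : ι → C(K, ℝ) → ℝ} {M : ℝ≥0}
    (hp : IsUniformlyExhaustive p M)
    (add : ∀ i f g, 0 ≤ f → 0 ≤ g → p i (f + g) = p i f + p i g) :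
    ∃ μ : Measure K, IsFiniteMeasure μ ∧ ∀ ε > 0, ∃ C : ℝ, 0 ≤ C ∧
      ∀ i f, 0 ≤ f → p i f ≤ C * ∫ y, f y ∂μ + ε * ‖f‖ := by
  choose μ hμ hpμ using fun i => exists_eq_integral_of_add_of_smul (fun f => hp.nonneg i) (add i)
    (hp.smul i)
  choose F C hC hF using fun n : ℕ =>
    hp.exists_finset_le_mul_sum_add (ε := 1 / (n + 1)) (by positivity)
  obtain ⟨ν, hν, hle⟩ := exists_isFiniteMeasure_forall_le_smul fun n => ∑ j ∈ F n, μ j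
  refine ⟨ν, hν, fun ε hε => ?_⟩
  obtain ⟨n, hn⟩ := exists_nat_one_div_lt hε
  obtain ⟨D, hD⟩ := hle n
  have hint : ∀ (f : C(K, ℝ)) (m : Measure K) [IsFiniteMeasure m], Integrable f m :=
    fun f m _ => f.continuous.integrable_of_hasCompactSupport (HasCompactSupport.of_compactSpace _)
  refine ⟨C n * D, mul_nonneg (hC n) D.2, fun i f hf => ?_⟩
  have hsum : ∑ j ∈ F n, p j f ≤ D * ∫ y, f y ∂ν := calc
    ∑ j ∈ F n, p j f = ∫ y, f y ∂(∑ j ∈ F n, μ j) := by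
        rw [integral_finsetSum_measure fun j _ => hint f _]
        exact Finset.sum_congr rfl fun j _ => hpμ j f hf
    _ ≤ ∫ y, f y ∂(D • ν) :=
        integral_mono_measure hD (Eventually.of_forall hf) (hint f _)
    _ = D * ∫ y, f y ∂ν := by rw [integral_smul_nnreal_measure]; rfl
  calc p i f ≤ C n * ∑ j ∈ F n, p j f + 1 / (n + 1) * ‖f‖ := hF n i f hf
    _ ≤ C n * (D * ∫ y, f y ∂ν) + ε * ‖f‖ := by gcongr; exact hC n
    _ = C n * D * ∫ y, f y ∂ν + ε * ‖f‖ := by ring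

/-- The functionals `ν i` are *uniformly controlled* by the measure `μ` if, up to arbitrarily small
multiples of the supremum norm, they are uniformly bounded in the `L¹(μ)`-norm. -/
def IsUniformlyControlled {K : Type*} [TopologicalSpace K] [CompactSpace K] [MeasurableSpace K]
    {ι : Type*} (ν : ι → C(K, ℝ) →ₗ[ℝ] ℝ) (μ : Measure K) : Prop :=
  ∀ ε > 0, ∃ C : ℝ, 0 ≤ C ∧ ∀ i f, |ν i f| ≤ C * ∫ y, |f y| ∂μ + ε * ‖f‖

theorem IsWeakMultiplier.exists_eq_mul_apply_add {T : C(K, ℝ) →L[ℝ] C(K, ℝ)}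
    (hT : IsWeakMultiplier T) :
    ∃ (g : K → ℝ) (ν : K → C(K, ℝ) →ₗ[ℝ] ℝ) (μ : Measure K), IsFiniteMeasure μ ∧
      IsUniformlyControlled ν μ ∧ (∃ G : ℝ≥0, ∀ x, |g x| ≤ G) ∧
      ∀ x f, T f x = g x * f x + ν x f := by
  choose g ν hg hν hle using fun x =>
    exists_eq_mul_apply_add_offDiag ((ContinuousMap.evalCLM ℝ x).comp T) x
  obtain ⟨μ, hμ, hctrl⟩ := hT.isUniformlyExhaustive.exists_controlMeasure
    fun i f g hf hg => offDiagVariation_add hf hg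
  refine ⟨g, ν, μ, hμ, fun ε hε => ?_, ⟨2 * (‖T‖₊ * ‖(1 : C(K, ℝ))‖₊), fun x => ?_⟩, hν⟩
  · obtain ⟨C, hC, h⟩ := hctrl ε hε
    refine ⟨C, hC, fun x f => (hle x f).trans ?_⟩
    simpa only [norm_abs_eq_norm, ContinuousMap.abs_apply] using h x |f| (abs_nonneg f)
  · refine (hg x).trans ?_
    push_cast
    gcongr
    exact norm_evalCLM_comp_le T x

end ControlMeasure

section Compactness

open MeasureTheory

theorem exists_subseq_forall_tendsto_apply {𝕜 H : Type*} [RCLike 𝕜] [NormedAddCommGroup H]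
    [InnerProductSpace 𝕜 H] [CompleteSpace H] {h : ℕ → H} {M : ℝ} (hM : ∀ n, ‖h n‖ ≤ M) :
    ∃ φ : ℕ → ℕ, StrictMono φ ∧
      ∀ ψ : H →L[𝕜] 𝕜, ∃ l, Tendsto (fun n => ψ (h (φ n))) atTop (𝓝 l) := by
  let V := (Submodule.span 𝕜 (Set.range h)).topologicalClosure
  have : CompleteSpace V := (Submodule.isClosed_topologicalClosure _).completeSpace_coe
  have : TopologicalSpace.SeparableSpace V :=
    ((Set.countable_range h).isSeparable.span (R := 𝕜)).closure.separableSpace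
  let k (n : ℕ) : V :=
    ⟨h n, Submodule.le_topologicalClosure _ (Submodule.subset_span (Set.mem_range_self n))⟩
  let F (n : ℕ) : WeakDual 𝕜 V := StrongDual.toWeakDual (InnerProductSpace.toDual 𝕜 V (k n))
  have hF : ∀ n, F n ∈ WeakDual.toStrongDual ⁻¹' Metric.closedBall (0 : StrongDual 𝕜 V) M :=
    fun n => mem_closedBall_zero_iff.2 <|
      ((InnerProductSpace.toDual 𝕜 V).norm_map (k n)).trans_le (hM n)
  obtain ⟨a, -, φ, hφ, ha⟩ := WeakDual.isSeqCompact_closedBall 𝕜 V 0 M hF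
  refine ⟨φ, hφ, fun ψ => ?_⟩
  obtain ⟨v, hv⟩ := (InnerProductSpace.toDual 𝕜 V).surjective (ψ.comp V.subtypeL)
  have hFv : ∀ n, star (F (φ n) v) = ψ (h (φ n)) := fun n => calc
    star (F (φ n) v) = inner 𝕜 v (k (φ n)) := inner_conj_symm _ _
    _ = ψ (h (φ n)) := DFunLike.congr_fun hv (k (φ n))
  exact ⟨star (a v), (((WeakDual.eval_continuous v).tendsto a).comp ha).star.congr hFv⟩

theorem exists_clm_forall_abs_sub_le {E H : Type*} [SeminormedAddCommGroup E] [NormedSpace ℝ E]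
    [SeminormedAddCommGroup H] [NormedSpace ℝ H] (ν : E →ₗ[ℝ] ℝ) (j : E →ₗ[ℝ] H) {a b : ℝ}
    (ha : 0 ≤ a) (hb : 0 ≤ b) (hν : ∀ f, |ν f| ≤ a * ‖j f‖ + b * ‖f‖) :
    ∃ ψ : H →L[ℝ] ℝ, ∀ f, |ν f - ψ (j f)| ≤ b * ‖f‖ := by
  obtain ⟨G, hG, hle⟩ := exists_extension_of_le_sublinear
    ⟨j.graph, (ν ∘ₗ LinearMap.fst ℝ E H).domRestrict _⟩ (fun z => a * ‖z.2‖ + b * ‖z.1‖)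
    (fun c hc z => by
      simp only [Prod.smul_fst, Prod.smul_snd, norm_smul, Real.norm_of_nonneg hc.le]
      ring)
    (fun z w => calc
      a * ‖z.2 + w.2‖ + b * ‖z.1 + w.1‖ ≤ a * (‖z.2‖ + ‖w.2‖) + b * (‖z.1‖ + ‖w.1‖) := by
        gcongr <;> exact norm_add_le _ _
      _ = a * ‖z.2‖ + b * ‖z.1‖ + (a * ‖w.2‖ + b * ‖w.1‖) := by ring)
    (by
      rintro ⟨⟨f, y⟩, rfl : y = j f⟩
      exact (le_abs_self _).trans (hν f))
  have abs_le : ∀ z, |G z| ≤ a * ‖z.2‖ + b * ‖z.1‖ := fun z => abs_le'.2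
    ⟨hle z, by simpa only [map_neg, Prod.fst_neg, Prod.snd_neg, norm_neg] using hle (-z)⟩
  refine ⟨(G ∘ₗ LinearMap.inr ℝ E H).mkContinuous a fun h => ?_, fun f => ?_⟩
  · simpa using abs_le (0, h)
  · have hf : G (f, j f) = ν f := hG ⟨(f, j f), rfl⟩
    have hsplit : ν f - G (0, j f) = G (f, 0) := by
      rw [← hf, ← map_sub, Prod.mk_sub_mk, sub_zero, sub_self]
    simpa [hsplit] using abs_le (f, 0)

theorem cauchySeq_of_forall_exists_cauchySeq_dist_le {α : Type*} [PseudoMetricSpace α] {u : ℕ → α}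
    (h : ∀ ε > 0, ∃ v : ℕ → α, CauchySeq v ∧ ∀ n, dist (u n) (v n) ≤ ε) : CauchySeq u := by
  refine Metric.cauchySeq_iff.2 fun ε hε => ?_
  obtain ⟨v, hv, huv⟩ := h (ε / 3) (by positivity)
  obtain ⟨N, hN⟩ := Metric.cauchySeq_iff.1 hv (ε / 3) (by positivity)
  refine ⟨N, fun m hm n hn => ?_⟩
  have htri := dist_triangle4 (u m) (v m) (v n) (u n)
  have hun := huv n
  rw [dist_comm] at hun
  linarith [hN m hm n hn, huv m]

variable {K : Type*} [TopologicalSpace K] [CompactSpace K] {T : C(K, ℝ) →L[ℝ] C(K, ℝ)} {g : K → ℝ}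
  {ν : K → C(K, ℝ) →ₗ[ℝ] ℝ}

theorem mul_apply_eq_comp_self_add_smul_sub (hT : ∀ x f, T f x = g x * f x + ν x f) (t : ℝ)
    (f : C(K, ℝ)) (x : K) :
    (g x ^ 2 + t) * f x =
      (T.comp T + t • ContinuousLinearMap.id ℝ C(K, ℝ)) f x - g x * ν x f - ν x (T f) := by
  change _ = T (T f) x + t * f x - g x * ν x f - ν x (T f)
  rw [hT x (T f), hT x f]
  ring

variable [MeasurableSpace K] [BorelSpace K] {μ : Measure K} [IsFiniteMeasure μ]

theorem integral_abs_le_norm_toLp_mul_norm_toLp (μ : Measure K) [IsFiniteMeasure μ] (f : C(K, ℝ)) :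
    ∫ y, |f y| ∂μ ≤
      ‖ContinuousMap.toLp 2 μ ℝ (1 : C(K, ℝ))‖ * ‖ContinuousMap.toLp 2 μ ℝ f‖ := by
  have hnorm : ‖ContinuousMap.toLp 2 μ ℝ |f|‖ = ‖ContinuousMap.toLp 2 μ ℝ f‖ := by
    rw [← sq_eq_sq₀ (norm_nonneg _) (norm_nonneg _), ← real_inner_self_eq_norm_sq,
      ← real_inner_self_eq_norm_sq, ContinuousMap.inner_toLp, ContinuousMap.inner_toLp]
    exact integral_congr_ae (Eventually.of_forall fun y => abs_mul_abs_self (f y))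
  calc ∫ y, |f y| ∂μ
      = inner ℝ (ContinuousMap.toLp 2 μ ℝ (1 : C(K, ℝ))) (ContinuousMap.toLp 2 μ ℝ |f|) := by
        rw [ContinuousMap.inner_toLp]
        exact integral_congr_ae (Eventually.of_forall fun y => (mul_one |f y|).symm)
    _ ≤ _ := (real_inner_le_norm _ _).trans_eq (by rw [hnorm])

namespace IsUniformlyControlled

theorem exists_subseq_forall_tendsto {ι : Type*} {ν : ι → C(K, ℝ) →ₗ[ℝ] ℝ}
    (hν : IsUniformlyControlled ν μ) {f : ℕ → C(K, ℝ)} {M : ℝ} (hM : ∀ n, ‖f n‖ ≤ M) :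
    ∃ φ : ℕ → ℕ, StrictMono φ ∧ ∀ i, ∃ l, Tendsto (fun n => ν i (f (φ n))) atTop (𝓝 l) := by
  have hM0 : 0 ≤ M := (norm_nonneg _).trans (hM 0)
  let J := ContinuousMap.toLp (E := ℝ) 2 μ ℝ
  obtain ⟨φ, hφ, hψ⟩ := exists_subseq_forall_tendsto_apply (𝕜 := ℝ) fun n =>
    J.le_of_opNorm_le_of_le le_rfl (hM n)
  refine ⟨φ, hφ, fun i => cauchySeq_tendsto_of_complete <|
    cauchySeq_of_forall_exists_cauchySeq_dist_le fun ε hε => ?_⟩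
  obtain ⟨C, hC, hle⟩ := hν (ε / (M + 1)) (by positivity)
  obtain ⟨ψ, hνψ⟩ := exists_clm_forall_abs_sub_le (ν i) J.toLinearMap (a := C * ‖J 1‖)
    (b := ε / (M + 1)) (by positivity) (by positivity) fun f => (hle i f).trans <| by
      rw [mul_assoc]
      gcongr
      exact integral_abs_le_norm_toLp_mul_norm_toLp μ f
  refine ⟨fun n => ψ (J (f (φ n))), (hψ ψ).choose_spec.cauchySeq, fun n => ?_⟩
  calc |ν i (f (φ n)) - ψ (J (f (φ n)))| ≤ ε / (M + 1) * ‖f (φ n)‖ := hνψ _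
    _ ≤ ε / (M + 1) * (M + 1) := by gcongr; linarith [hM (φ n)]
    _ = ε := div_mul_cancel₀ _ (by positivity)

theorem tendstoUniformly {ι β : Type*} {ν : ι → C(K, ℝ) →ₗ[ℝ] ℝ} (hν : IsUniformlyControlled ν μ)
    {l : Filter β} [l.IsCountablyGenerated] {w : β → C(K, ℝ)} {M : ℝ} (hM : ∀ q, ‖w q‖ ≤ M)
    (hw : ∀ y, Tendsto (fun q => w q y) l (𝓝 0)) :
    TendstoUniformly (fun q i => ν i (w q)) 0 l := by
  have hint : Tendsto (fun q => ∫ y, |w q y| ∂μ) l (𝓝 0) := by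
    rw [← integral_zero K ℝ (μ := μ)]
    refine tendsto_integral_filter_of_dominated_convergence (fun _ => M) ?_ ?_
      (integrable_const M) ?_
    · exact Eventually.of_forall fun q => (w q).continuous.abs.aestronglyMeasurable
    · refine Eventually.of_forall fun q => Eventually.of_forall fun y => ?_
      rw [Real.norm_eq_abs, abs_abs]
      exact ((w q).norm_coe_le_norm y).trans (hM q)
    · exact Eventually.of_forall fun y => by simpa using (hw y).abs
  refine Metric.tendstoUniformly_iff.2 fun η hη => ?_
  rcases isEmpty_or_nonempty β with _ | ⟨⟨q₀⟩⟩
  · exact Eventually.of_forall isEmptyElim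
  have hM0 : 0 ≤ M := (norm_nonneg _).trans (hM q₀)
  obtain ⟨C, hC, hle⟩ := hν (η / 2 / (M + 1)) (by positivity)
  filter_upwards [hint.eventually_lt_const (show 0 < η / 2 / (C + 1) by positivity)]
    with q hq i
  rw [Pi.zero_apply, dist_zero_left]
  have hC' : C * (η / 2 / (C + 1)) ≤ η / 2 := by
    rw [mul_div_left_comm]
    exact mul_le_of_le_one_right (by positivity) (div_le_one_of_le₀ (by linarith) (by positivity))
  calc ‖ν i (w q)‖ ≤ C * ∫ y, |w q y| ∂μ + η / 2 / (M + 1) * ‖w q‖ := hle i (w q)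
    _ ≤ C * (η / 2 / (C + 1)) + η / 2 / (M + 1) * M := by gcongr; exact hM q
    _ < η / 2 + η / 2 / (M + 1) * (M + 1) := by
      refine add_lt_add_of_le_of_lt hC' ?_
      gcongr
      linarith
    _ = η := by rw [div_mul_cancel₀ _ (by positivity), add_halves]

end IsUniformlyControlled

theorem tendsto_zero_of_tendsto_comp_self_add_smul (hT : ∀ x f, T f x = g x * f x + ν x f)
    (hν : IsUniformlyControlled ν μ) {G : NNReal} (hg : ∀ x, |g x| ≤ G) {t : ℝ} (ht : 0 < t)
    {β : Type*} {l : Filter β} [l.IsCountablyGenerated] {w : β → C(K, ℝ)} {M : ℝ}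
    (hM : ∀ q, ‖w q‖ ≤ M) (hw : ∀ x, Tendsto (fun q => w q x) l (𝓝 0))
    (hA : Tendsto (fun q => (T.comp T + t • ContinuousLinearMap.id ℝ C(K, ℝ)) (w q)) l (𝓝 0)) :
    Tendsto w l (𝓝 0) := by
  have hνw := hν.tendstoUniformly hM hw
  have hTw : ∀ x, Tendsto (fun q => T (w q) x) l (𝓝 0) := fun x => by
    simpa only [hT, mul_zero, add_zero, Pi.zero_apply] using
      ((hw x).const_mul (g x)).add (hνw.tendsto_at x)
  have hνTw := hν.tendstoUniformly (fun q => T.le_of_opNorm_le_of_le le_rfl (hM q)) hTw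
  refine Metric.nhds_basis_closedBall.tendsto_right_iff.2 fun ε hε => ?_
  obtain ⟨s, hs, hsε⟩ : ∃ s > 0, s + G * s + s = t * ε :=
    ⟨t * ε / (1 + G + 1), by positivity, by field_simp⟩
  filter_upwards [hA.eventually_mem (Metric.closedBall_mem_nhds 0 hs),
    Metric.tendstoUniformly_iff.1 hνw s hs, Metric.tendstoUniformly_iff.1 hνTw s hs]
    with q hAq hνq hνTq
  rw [mem_closedBall_zero_iff] at hAq ⊢
  refine (ContinuousMap.norm_le _ hε.le).2 fun x => le_of_mul_le_mul_left ?_ ht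
  have hνx : |ν x (w q)| ≤ s := by simpa using (hνq x).le
  have hνTx : |ν x (T (w q))| ≤ s := by simpa using (hνTq x).le
  calc t * |w q x| ≤ (g x ^ 2 + t) * |w q x| := by gcongr; linarith [sq_nonneg (g x)]
    _ = |(g x ^ 2 + t) * w q x| := by rw [abs_mul, abs_of_pos (by positivity : 0 < g x ^ 2 + t)]
    _ ≤ s + G * s + s := by
      rw [mul_apply_eq_comp_self_add_smul_sub hT]
      refine (abs_sub _ _).trans (add_le_add ((abs_sub _ _).trans (add_le_add ?_ ?_)) hνTx)
      · exact (ContinuousMap.norm_coe_le_norm _ x).trans hAq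
      · rw [abs_mul]
        exact mul_le_mul (hg x) hνx (abs_nonneg _) G.2
    _ = t * ε := hsε

theorem exists_subseq_forall_tendsto_of_tendsto_comp_self_add_smul
    (hT : ∀ x f, T f x = g x * f x + ν x f) (hν : IsUniformlyControlled ν μ) {t : ℝ} (ht : 0 < t)
    {u : ℕ → C(K, ℝ)} {v : C(K, ℝ)} {M : ℝ} (hM : ∀ n, ‖u n‖ ≤ M)
    (hA : Tendsto (fun n => (T.comp T + t • ContinuousLinearMap.id ℝ C(K, ℝ)) (u n)) atTop (𝓝 v)) :
    ∃ φ : ℕ → ℕ, StrictMono φ ∧ ∀ x, ∃ l, Tendsto (fun n => u (φ n) x) atTop (𝓝 l) := by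
  obtain ⟨φ₁, hφ₁, hlim₁⟩ := hν.exists_subseq_forall_tendsto hM
  obtain ⟨φ₂, hφ₂, hlim₂⟩ := hν.exists_subseq_forall_tendsto fun n =>
    T.le_of_opNorm_le_of_le le_rfl (hM (φ₁ n))
  have hφ := hφ₁.comp hφ₂
  refine ⟨φ₁ ∘ φ₂, hφ, fun x => ?_⟩
  obtain ⟨l₁, hl₁⟩ := hlim₁ x
  obtain ⟨l₂, hl₂⟩ := hlim₂ x
  have hAx := ((continuous_eval_const x).tendsto v).comp (hA.comp hφ.tendsto_atTop)
  have hlim := ((hAx.sub ((hl₁.comp hφ₂.tendsto_atTop).const_mul (g x))).sub hl₂).div_const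
    (g x ^ 2 + t)
  refine ⟨_, hlim.congr fun n => (eq_div_of_mul_eq (by positivity) ?_).symm⟩
  exact (mul_comm _ _).trans (mul_apply_eq_comp_self_add_smul_sub hT t (u (φ₁ (φ₂ n))) x)

end Compactness

section Surjectivity

theorem tendsto_sub_prod_zero {α G : Type*} [AddGroup G] [TopologicalSpace G] [ContinuousSub G]
    {l : Filter α} {u : α → G} {a : G} (hu : Tendsto u l (𝓝 a)) :
    Tendsto (fun q : α × α => u q.1 - u q.2) (l ×ˢ l) (𝓝 0) :=
  sub_self a ▸ (hu.comp tendsto_fst).sub (hu.comp tendsto_snd)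

theorem exists_surjective_add_smul_id {X : Type*} [NormedAddCommGroup X] [NormedSpace ℝ X]
    [CompleteSpace X] (B : X →L[ℝ] X) :
    ∃ t ≥ 0, Function.Surjective (B + (t : ℝ) • ContinuousLinearMap.id ℝ X) := by
  refine ⟨‖-B‖ * ‖(1 : X →L[ℝ] X)‖ + 1, by positivity, ?_⟩
  have hmem : ‖-B‖ * ‖(1 : X →L[ℝ] X)‖ + 1 ∈ resolventSet ℝ (-B) :=
    spectrum.mem_resolventSet_of_norm_lt_mul ((lt_add_one _).trans_le (le_abs_self _))
  rw [spectrum.mem_resolventSet_iff, ContinuousLinearMap.isUnit_iff_bijective,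
    Algebra.algebraMap_eq_smul_one, sub_neg_eq_add, add_comm] at hmem
  exact hmem.2

variable {K : Type*} [TopologicalSpace K] [CompactSpace K] [T2Space K] {T : C(K, ℝ) →L[ℝ] C(K, ℝ)}

namespace IsWeakMultiplier

theorem isUpperSemiFredholm_comp_self_add_smul (hT : IsWeakMultiplier T) {t : ℝ} (ht : 0 < t) :
    IsUpperSemiFredholm (T.comp T + t • ContinuousLinearMap.id ℝ C(K, ℝ)) := by
  borelize K
  obtain ⟨g, ν, μ, _, hν, ⟨G, hg⟩, hdec⟩ := hT.exists_eq_mul_apply_add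
  rintro u ⟨M, hM⟩ ⟨v, hv⟩
  obtain ⟨φ, hφ, hlim⟩ :=
    exists_subseq_forall_tendsto_of_tendsto_comp_self_add_smul hdec hν ht hM hv
  refine ⟨φ, hφ, cauchySeq_tendsto_of_complete <| cauchySeq_iff_tendsto_dist_atTop_0.2 ?_⟩
  simp_rw [dist_eq_norm, ← prod_atTop_atTop_eq]
  refine tendsto_zero_iff_norm_tendsto_zero.1 <|
    tendsto_zero_of_tendsto_comp_self_add_smul hdec hν hg ht
      (fun q => norm_sub_le_of_le (hM _) (hM _)) (fun x => ?_) ?_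
  · exact tendsto_sub_prod_zero (hlim x).choose_spec
  · simp_rw [map_sub]
    exact tendsto_sub_prod_zero (hv.comp hφ.tendsto_atTop)

theorem surjective_of_antilipschitzWith (hT : IsWeakMultiplier T) {c : NNReal}
    (hc : AntilipschitzWith c T) : Function.Surjective T := by
  let A (t : ℝ) : C(K, ℝ) →L[ℝ] C(K, ℝ) := T.comp T + t • ContinuousLinearMap.id ℝ C(K, ℝ)
  have hA0 : A 0 = T.comp T := by simp [A]
  have hlip : AntilipschitzWith (c * c) (A 0) := hA0 ▸ hc.comp hc
  have hS : IsPreconnected (A '' Set.Ici 0) := isPreconnected_Ici.image A (by fun_prop)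
  have hfred : ∀ B ∈ A '' Set.Ici 0, IsUpperSemiFredholm B := by
    rintro _ ⟨t, ht, rfl⟩
    rcases (Set.mem_Ici.1 ht).eq_or_lt with rfl | ht
    · exact .of_antilipschitzWith hlip
    · exact hT.isUpperSemiFredholm_comp_self_add_smul ht
  obtain ⟨t, ht, hsurj⟩ := exists_surjective_add_smul_id (T.comp T)
  have hsurj0 := surjective_of_isPreconnected_of_isUpperSemiFredholm hS hfred
    (Set.mem_image_of_mem A Set.self_mem_Ici) hlip.injective (Set.mem_image_of_mem A ht) hsurj
  rw [hA0] at hsurj0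
  exact .of_comp hsurj0

end IsWeakMultiplier

end Surjectivity

section SpaceableCriterion

open scoped NNReal

theorem Spaceable.mono {X : Type*} [NormedAddCommGroup X] [NormedSpace ℝ X] {A B : Set X}
    (hA : Spaceable A) (hAB : A ⊆ B) : Spaceable B := by
  obtain ⟨W, hclosed, hinf, hWA⟩ := hA
  exact ⟨W, hclosed, hinf, hWA.trans (Set.union_subset_union_left _ hAB)⟩

theorem eq_zero_of_mem_topologicalClosure_of_tendsto {X : Type*} [NormedAddCommGroup X]
    [NormedSpace ℝ X] {ψ : ℕ → X →ₗ[ℝ] ℝ} {M : ℝ} (hψ : ∀ n S, ‖ψ n S‖ ≤ M * ‖S‖)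
    {W : Submodule ℝ X} {c : ℝ} (hc : 0 ≤ c) (hW : ∀ S ∈ W, ∃ᶠ n in atTop, ‖S‖ ≤ c * ‖ψ n S‖)
    {S : X} (hS : S ∈ W.topologicalClosure) (hlim : Tendsto (fun n => ψ n S) atTop (𝓝 0)) :
    S = 0 := by
  have hle : ∀ S' ∈ W, ‖S'‖ ≤ c * (M * ‖S' - S‖) := fun S' hS' => by
    have hbound : Tendsto (fun n => c * (‖ψ n S‖ + M * ‖S' - S‖)) atTop
        (𝓝 (c * (M * ‖S' - S‖))) := by
      simpa using (hlim.norm.add_const (M * ‖S' - S‖)).const_mul c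
    refine ge_of_tendsto_of_frequently hbound ((hW S' hS').mono fun n hn => hn.trans ?_)
    gcongr
    calc ‖ψ n S'‖ = ‖ψ n S + ψ n (S' - S)‖ := by rw [← map_add, add_sub_cancel]
      _ ≤ ‖ψ n S‖ + M * ‖S' - S‖ := norm_add_le_of_le le_rfl (hψ n _)
  have hclosed : IsClosed {S' | ‖S'‖ ≤ c * (M * ‖S' - S‖)} :=
    isClosed_le (by fun_prop) (by fun_prop)
  have hSS : ‖S‖ ≤ c * (M * ‖S - S‖) := closure_minimal hle hclosed hS
  simpa using hSS

theorem exists_forall_abs_le_abs_apply {ι : Type*} [Nonempty ι] (a : ι →₀ ℝ) :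
    ∃ j, ∀ i, |a i| ≤ |a j| := by
  classical
  obtain ⟨i₀⟩ := ‹Nonempty ι›
  obtain ⟨j, -, hj⟩ := Finset.exists_max_image (insert i₀ a.support) (fun i => |a i|)
    (Finset.insert_nonempty _ _)
  refine ⟨j, fun i => ?_⟩
  by_cases hi : a i = 0
  · simp only [hi, abs_zero, abs_nonneg]
  · exact hj i (Finset.mem_insert_of_mem (Finsupp.mem_support_iff.2 hi))

theorem spaceable_setOf_not_tendsto {X : Type*} [NormedAddCommGroup X] [NormedSpace ℝ X]
    {ψ : ℕ → X →ₗ[ℝ] ℝ} {M : ℝ} (hψ : ∀ n S, ‖ψ n S‖ ≤ M * ‖S‖) {R : ℕ → X}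
    {C : ℝ≥0} {ε : ℝ} (hε : 0 < ε)
    (hnorm : ∀ (a : ℕ →₀ ℝ) (j : ℕ), (∀ i, |a i| ≤ |a j|) →
      ‖Finsupp.linearCombination ℝ R a‖ ≤ C * |a j|)
    (hcoord : ∀ (a : ℕ →₀ ℝ) (j : ℕ),
      ∃ᶠ n in atTop, |a j| * ε ≤ ‖ψ n (Finsupp.linearCombination ℝ R a)‖) :
    Spaceable {S | ¬ Tendsto (fun n => ψ n S) atTop (𝓝 0)} := by
  have hlin : LinearIndependent ℝ R := linearIndependent_iff.2 fun a ha => Finsupp.ext fun j => by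
    obtain ⟨n, hn⟩ := (hcoord a j).exists
    rw [ha, map_zero, norm_zero] at hn
    exact abs_nonpos_iff.1 (nonpos_of_mul_nonpos_left hn hε)
  have hspan : ∀ S ∈ Submodule.span ℝ (Set.range R),
      ∃ᶠ n in atTop, ‖S‖ ≤ C / ε * ‖ψ n S‖ := fun S hS => by
    obtain ⟨a, rfl⟩ := LinearMap.mem_range.1 (Finsupp.range_linearCombination ℝ (v := R) ▸ hS)
    obtain ⟨j, hj⟩ := exists_forall_abs_le_abs_apply a
    refine (hcoord a j).mono fun n hn => ?_
    calc ‖Finsupp.linearCombination ℝ R a‖ ≤ C * |a j| := hnorm a j hj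
      _ = C / ε * (|a j| * ε) := by field_simp
      _ ≤ C / ε * ‖ψ n (Finsupp.linearCombination ℝ R a)‖ := by gcongr
  let W := (Submodule.span ℝ (Set.range R)).topologicalClosure
  refine ⟨W, Submodule.isClosed_topologicalClosure _, fun hfin => ?_, fun S hS => ?_⟩
  · have hmem : ∀ j, R j ∈ W := fun j =>
      Submodule.le_topologicalClosure _ (Submodule.subset_span (Set.mem_range_self j))
    have hRW : LinearIndependent ℝ fun j => (⟨R j, hmem j⟩ : W) := .of_comp W.subtype hlin
    exact not_finite_iff_infinite.2 (inferInstance : Infinite ℕ) hRW.finite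
  · exact or_iff_not_imp_left.2 fun hlim =>
      eq_zero_of_mem_topologicalClosure_of_tendsto hψ (div_nonneg C.2 hε.le) hspan hS
        (not_not.1 hlim)

theorem spaceable_setOf_not_tendsto_apply {X Y : Type*} [NormedAddCommGroup X] [NormedSpace ℝ X]
    [NormedAddCommGroup Y] [NormedSpace ℝ Y] {e : ℕ → X} {M : ℝ} (he : ∀ n, ‖e n‖ ≤ M)
    {φ : ℕ → Y →ₗ[ℝ] ℝ} (hφ : ∀ n v, ‖φ n v‖ ≤ ‖v‖) {R : ℕ → X →L[ℝ] Y} {C : ℝ≥0} {ε : ℝ}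
    (hε : 0 < ε)
    (hnorm : ∀ (a : ℕ →₀ ℝ) (j : ℕ), (∀ i, |a i| ≤ |a j|) →
      ∀ u, ‖a.sum fun i r => r • R i u‖ ≤ |a j| * (C * ‖u‖))
    (hcoord : ∀ (a : ℕ →₀ ℝ) (j : ℕ),
      ∃ᶠ n in atTop, |a j| * ε ≤ ‖φ n (a.sum fun i r => r • R i (e n))‖) :
    Spaceable {S : X →L[ℝ] Y | ¬ Tendsto (fun n => φ n (S (e n))) atTop (𝓝 0)} := by
  let ψ (n : ℕ) : (X →L[ℝ] Y) →ₗ[ℝ] ℝ :=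
    φ n ∘ₗ (ContinuousLinearMap.apply ℝ Y (e n) : (X →L[ℝ] Y) →ₗ[ℝ] Y)
  have happly : ∀ (a : ℕ →₀ ℝ) u,
      Finsupp.linearCombination ℝ R a u = a.sum fun i r => r • R i u := fun a u => by
    rw [Finsupp.linearCombination_apply, Finsupp.sum, sum_apply]
    rfl
  have hψ : ∀ n S, ‖ψ n S‖ ≤ M * ‖S‖ := fun n S => by
    rw [mul_comm]
    exact (hφ n _).trans (S.le_opNorm_of_le (he n))
  refine spaceable_setOf_not_tendsto (ψ := ψ) hψ hε (R := R) (C := C)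
    (fun a j hj => ?_) fun a j => ?_
  · refine ContinuousLinearMap.opNorm_le_bound _ (by positivity) fun u => ?_
    rw [happly, mul_right_comm, mul_comm _ |a j|]
    exact hnorm a j hj u
  · refine (hcoord a j).mono fun n hn => ?_
    rwa [← happly] at hn

end SpaceableCriterion

section DisjointFamilies

open scoped NNReal

theorem pairwise_smul_mul_smul_eq_zero {ι R A : Type*} [CommMonoid R] [Semiring A]
    [DistribMulAction R A] [IsScalarTower R A A] [SMulCommClass R A A] {f : ι → A}
    (hf : Pairwise fun i j => f i * f j = 0) (c : ι → R) :
    Pairwise fun i j => c i • f i * c j • f j = 0 := fun i j hij => by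
  simp only [smul_mul_smul_comm, hf hij, smul_zero]

theorem finsuppSum_smul_apply_of_pairwise_mul_eq_zero {K ι : Type*} [TopologicalSpace K]
    {f : ι → C(K, ℝ)} (hf : Pairwise fun i j => f i * f j = 0) (a : ι →₀ ℝ) {j : ι}
    {y : K} (hj : f j y ≠ 0) :
    (a.sum fun i r => r • f i) y = a j * f j y := by
  have hne : ∀ i, i ≠ j → f i y = 0 := fun i hij =>
    (mul_eq_zero.1 (DFunLike.congr_fun (hf hij) y)).resolve_right hj
  rw [Finsupp.sum, ContinuousMap.sum_apply, Finset.sum_eq_single j]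
  · rfl
  · intro i _ hij
    rw [ContinuousMap.smul_apply, hne i hij, smul_zero]
  · intro hja
    rw [Finsupp.notMem_support_iff.1 hja, zero_smul, ContinuousMap.zero_apply]

variable {K : Type*} [TopologicalSpace K] [CompactSpace K] {ι : Type*} {f : ι → C(K, ℝ)}

theorem norm_sum_le_of_pairwise_mul_eq_zero (hf : Pairwise fun i j => f i * f j = 0)
    {s : Finset ι} {B : ℝ} (hB : 0 ≤ B) (hle : ∀ i ∈ s, ‖f i‖ ≤ B) : ‖∑ i ∈ s, f i‖ ≤ B := by
  refine (ContinuousMap.norm_le _ hB).2 fun y => ?_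
  rw [ContinuousMap.sum_apply]
  by_cases hy : ∃ i ∈ s, f i y ≠ 0
  · obtain ⟨i, hi, hiy⟩ := hy
    rw [Finset.sum_eq_single_of_mem i hi fun j _ hji =>
      (mul_eq_zero.1 (DFunLike.congr_fun (hf hji) y)).resolve_right hiy]
    exact ((f i).norm_coe_le_norm y).trans (hle i hi)
  · push Not at hy
    rwa [Finset.sum_eq_zero hy, norm_zero]

theorem norm_finsuppSum_smul_le_of_pairwise_mul_eq_zero (hf : Pairwise fun i j => f i * f j = 0)
    {B : ℝ} (hB : ∀ i, ‖f i‖ ≤ B) {a : ι →₀ ℝ} {j : ι} (hj : ∀ i, |a i| ≤ |a j|) :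
    ‖a.sum fun i r => r • f i‖ ≤ |a j| * B := by
  have hB0 : 0 ≤ B := (norm_nonneg _).trans (hB j)
  refine norm_sum_le_of_pairwise_mul_eq_zero (pairwise_smul_mul_smul_eq_zero hf a)
    (by positivity) fun i _ => ?_
  rw [norm_smul, Real.norm_eq_abs]
  exact mul_le_mul (hj i) (hB i) (norm_nonneg _) (abs_nonneg _)

theorem tendsto_apply_of_pairwise_mul_eq_zero (φ : C(K, ℝ) →L[ℝ] ℝ) {M : ℝ}
    (hM : ∀ i, ‖f i‖ ≤ M) (hf : Pairwise fun i j => f i * f j = 0) :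
    Tendsto (fun i => φ (f i)) cofinite (𝓝 0) := by
  rcases isEmpty_or_nonempty ι with _ | ⟨⟨i₀⟩⟩
  · simp [cofinite_eq_bot]
  have hM0 : 0 ≤ M := (norm_nonneg _).trans (hM i₀)
  let σ (i : ι) : ℝ := SignType.sign (φ (f i))
  have hσ : ∀ i, ‖σ i‖ ≤ 1 := fun i => by
    cases h : SignType.sign (φ (f i)) <;> simp [σ, h]
  suffices hsum : Summable fun i => |φ (f i)| from
    (tendsto_zero_iff_abs_tendsto_zero _).2 hsum.tendsto_cofinite_zero
  refine summable_of_sum_le (c := ‖φ‖ * M) (fun _ => abs_nonneg _) fun s => ?_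
  calc ∑ i ∈ s, |φ (f i)| = φ (∑ i ∈ s, σ i • f i) := by
        simp only [map_sum, map_smul, smul_eq_mul, σ, sign_mul_self]
    _ ≤ ‖φ‖ * ‖∑ i ∈ s, σ i • f i‖ := (le_abs_self _).trans (φ.le_opNorm _)
    _ ≤ ‖φ‖ * M := by
      gcongr
      refine norm_sum_le_of_pairwise_mul_eq_zero (pairwise_smul_mul_smul_eq_zero hf σ) hM0
        fun i _ => ?_
      exact (norm_smul_le _ _).trans
        ((mul_le_of_le_one_left (norm_nonneg _) (hσ i)).trans (hM i))

theorem tendsto_apply_apply_of_pairwise_mul_eq_zero (T : C(K, ℝ) →L[ℝ] C(K, ℝ)) (y : K)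
    {f : ℕ → C(K, ℝ)} {M : ℝ} (hM : ∀ n, ‖f n‖ ≤ M) (hf : Pairwise fun i j => f i * f j = 0) :
    Tendsto (fun n => T (f n) y) atTop (𝓝 0) := by
  rw [← Nat.cofinite_eq_atTop]
  exact tendsto_apply_of_pairwise_mul_eq_zero ((ContinuousMap.evalCLM ℝ y).comp T) hM hf

theorem summable_smul_of_pairwise_mul_eq_zero (hle : ∀ i, ‖f i‖ ≤ 1)
    (hf : Pairwise fun i j => f i * f j = 0) {c : ι → ℝ} (hc : Tendsto c cofinite (𝓝 0)) :
    Summable fun i => c i • f i := by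
  refine summable_iff_vanishing_norm.2 fun η hη => ?_
  have hfin : {i | ¬ ‖c i‖ < η / 2}.Finite :=
    (tendsto_zero_iff_norm_tendsto_zero.1 hc).eventually_lt_const (half_pos hη)
  refine ⟨hfin.toFinset, fun t ht => lt_of_le_of_lt ?_ (half_lt_self hη)⟩
  refine norm_sum_le_of_pairwise_mul_eq_zero (pairwise_smul_mul_smul_eq_zero hf c) (half_pos hη).le
    fun i hi => ?_
  have hci : ‖c i‖ < η / 2 := by
    by_contra hcon
    exact Finset.disjoint_left.1 ht hi (hfin.mem_toFinset.2 hcon)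
  exact (norm_smul_le _ _).trans
    ((mul_le_of_le_one_right (norm_nonneg _) (hle i)).trans hci.le)

theorem exists_clm_apply_eq_tsum {X : Type*} [SeminormedAddCommGroup X] [NormedSpace ℝ X]
    (hle : ∀ i, ‖f i‖ ≤ 1) (hf : Pairwise fun i j => f i * f j = 0) {a : ι → X →L[ℝ] ℝ}
    {C : ℝ≥0} (ha : ∀ i, ‖a i‖ ≤ C) (hlim : ∀ u, Tendsto (fun i => a i u) cofinite (𝓝 0)) :
    ∃ D : X →L[ℝ] C(K, ℝ), ‖D‖ ≤ C ∧ ∀ u y, D u y = ∑' i, a i u * f i y := by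
  have hsum : ∀ u, Summable fun i => a i u • f i := fun u =>
    summable_smul_of_pairwise_mul_eq_zero hle hf (hlim u)
  let D₀ : X →ₗ[ℝ] C(K, ℝ) :=
    { toFun := fun u => ∑' i, a i u • f i
      map_add' := fun u v => by
        simp only [map_add, add_smul, (hsum u).tsum_add (hsum v)]
      map_smul' := fun r u => by
        simp only [map_smul, smul_assoc, (hsum u).tsum_const_smul r, RingHom.id_apply] }
  have hD₀ : ∀ u, ‖D₀ u‖ ≤ C * ‖u‖ := fun u => mem_closedBall_zero_iff.1 <|
    Metric.isClosed_closedBall.mem_of_tendsto (hsum u).hasSum <| Eventually.of_forall fun s => by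
      rw [mem_closedBall_zero_iff]
      refine norm_sum_le_of_pairwise_mul_eq_zero (pairwise_smul_mul_smul_eq_zero hf _)
        (by positivity) fun i _ => (norm_smul_le _ _).trans ?_
      exact (mul_le_of_le_one_right (norm_nonneg _) (hle i)).trans
        ((a i).le_of_opNorm_le (ha i) u)
  exact ⟨D₀.mkContinuous C hD₀, D₀.mkContinuous_norm_le C.2 hD₀, fun u y =>
    (ContinuousMap.tsum_apply (hsum u) y).symm⟩

end DisjointFamilies

section BumpFamilies

/-- Continuous functions `X → [0, 1]` with pairwise zero products, `g j` being `1` on `B j`. They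
cut an operator on `C(X, ℝ)` into operators with pairwise disjoint values. -/
structure IsDisjointBumpFamily {X ι : Type*} [TopologicalSpace X] (g : ι → C(X, ℝ))
    (B : ι → Set X) : Prop where
  mem_Icc : ∀ j y, g j y ∈ Set.Icc (0 : ℝ) 1
  pairwise_mul_eq_zero : Pairwise fun i j => g i * g j = 0
  eqOn_one : ∀ j, Set.EqOn (g j) 1 (B j)

theorem IsDisjointBumpFamily.norm_le_one {X ι : Type*} [TopologicalSpace X] [CompactSpace X]
    {g : ι → C(X, ℝ)} {B : ι → Set X} (hg : IsDisjointBumpFamily g B) (j : ι) : ‖g j‖ ≤ 1 :=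
  (ContinuousMap.norm_le _ zero_le_one).2 fun y => by
    rw [Real.norm_of_nonneg (hg.mem_Icc j y).1]
    exact (hg.mem_Icc j y).2

variable {X : Type*} [TopologicalSpace X]

theorem IsDisjointBumpFamily.apply_eq_zero {ι : Type*} {g : ι → C(X, ℝ)} {B : ι → Set X}
    (hg : IsDisjointBumpFamily g B) {i j : ι} (hij : i ≠ j) {y : X} (hy : y ∈ B j) : g i y = 0 := by
  have hmul : g i y * g j y = 0 := DFunLike.congr_fun (hg.pairwise_mul_eq_zero hij) y
  rwa [hg.eqOn_one j hy, Pi.one_apply, mul_one] at hmul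

theorem IsDisjointBumpFamily.injective_of_singleton {ι : Type*} {g : ι → C(X, ℝ)} {z : ι → X}
    (hg : IsDisjointBumpFamily g fun k => {z k}) : Function.Injective z := fun i j hij => by
  by_contra hne
  have h0 : g i (z j) = 0 := hg.apply_eq_zero hne rfl
  have h1 : g i (z i) = 1 := hg.eqOn_one i rfl
  rw [hij, h0] at h1
  exact zero_ne_one h1

theorem exists_continuousMap_eqOn_one_mul_eq_zero [NormalSpace X] {s t : Set X} (hs : IsClosed s)
    (ht : IsClosed t) (hst : Disjoint s t) :
    ∃ v w : C(X, ℝ), (∀ y, v y ∈ Set.Icc (0 : ℝ) 1) ∧ (∀ y, w y ∈ Set.Icc (0 : ℝ) 1) ∧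
      Set.EqOn v 1 s ∧ Set.EqOn w 1 t ∧ v * w = 0 := by
  obtain ⟨u, hus, hut, hu⟩ := exists_continuous_zero_one_of_isClosed hs ht hst
  refine ⟨⟨fun y => max (1 - 2 * u y) 0, by fun_prop⟩, ⟨fun y => max (2 * u y - 1) 0, by fun_prop⟩,
    fun y => ?_, fun y => ?_, fun y hy => ?_, fun y hy => ?_, ?_⟩
  · have := hu y
    constructor <;> simp only [ContinuousMap.coe_mk] <;> grind
  · have := hu y
    constructor <;> simp only [ContinuousMap.coe_mk] <;> grind
  · simp [hus hy]
  · norm_num [hut hy]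
  · ext y
    simp only [ContinuousMap.mul_apply, ContinuousMap.coe_mk, ContinuousMap.zero_apply]
    grind

theorem exists_isDisjointBumpFamily_of_antitone [NormalSpace X] {A B : ℕ → Set X} (hA : Antitone A)
    (hBA : ∀ j, B j ⊆ A j) (hdisj : ∀ j, Disjoint (closure (B j)) (closure (A (j + 1)))) :
    ∃ g : ℕ → C(X, ℝ), IsDisjointBumpFamily g B := by
  choose v w hv hw hv1 hw1 hvw using fun j =>
    exists_continuousMap_eqOn_one_mul_eq_zero isClosed_closure isClosed_closure (hdisj j)
  let g (j : ℕ) : C(X, ℝ) := (∏ i ∈ Finset.range j, w i) * v j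
  have hgapply : ∀ j y, g j y = (∏ i ∈ Finset.range j, w i y) * v j y := fun j y => by
    simp only [g, ContinuousMap.mul_apply, ContinuousMap.prod_apply]
  have hmul : ∀ i j, i < j → g i * g j = 0 := fun i j hij => by
    have hdvd : v i * w i ∣ g i * g j := mul_dvd_mul (dvd_mul_left _ _)
      ((Finset.dvd_prod_of_mem w (Finset.mem_range.2 hij)).mul_right _)
    rwa [hvw, zero_dvd_iff] at hdvd
  refine ⟨g, fun j y => ?_, fun i j hij => ?_, fun j y hy => ?_⟩
  · rw [hgapply]
    exact ⟨mul_nonneg (Finset.prod_nonneg fun i _ => (hw i y).1) (hv j y).1,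
      mul_le_one₀ (Finset.prod_le_one (fun i _ => (hw i y).1) fun i _ => (hw i y).2)
        (hv j y).1 (hv j y).2⟩
  · rcases hij.lt_or_gt with h | h
    · exact hmul i j h
    · rw [mul_comm, hmul j i h]
  · rw [hgapply, hv1 j (subset_closure hy), Finset.prod_eq_one fun i hi =>
      hw1 i (subset_closure (hA (Finset.mem_range.1 hi) (hBA j hy)))]
    simp only [Pi.one_apply, mul_one]

theorem exists_isDisjointBumpFamily_of_exhaustion [NormalSpace X] {S : Set X} (hS : S.Infinite)
    {P : Set X → Prop} (hP : ∀ A ⊆ S, A.Infinite → ∃ B ⊆ A, ∃ A' ⊆ A,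
      P B ∧ A'.Infinite ∧ Disjoint (closure B) (closure A')) :
    ∃ (g : ℕ → C(X, ℝ)) (B : ℕ → Set X),
      (∀ j, B j ⊆ S ∧ P (B j)) ∧ IsDisjointBumpFamily g B := by
  choose! B hB next hnext hPB hinf hdisj using hP
  let A (j : ℕ) : Set X := next^[j] S
  have hAsucc : ∀ j, A (j + 1) = next (A j) := fun j => Function.iterate_succ_apply' next j S
  have hA : ∀ j, A j ⊆ S ∧ (A j).Infinite := fun j => by
    induction j with
    | zero => exact ⟨subset_rfl, hS⟩
    | succ j ih =>
      rw [hAsucc]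
      exact ⟨(hnext _ ih.1 ih.2).trans ih.1, hinf _ ih.1 ih.2⟩
  have hBA : ∀ j, B (A j) ⊆ A j := fun j => hB _ (hA j).1 (hA j).2
  obtain ⟨g, hg⟩ := exists_isDisjointBumpFamily_of_antitone
    (antitone_nat_of_succ_le fun j => (hAsucc j).trans_le (hnext _ (hA j).1 (hA j).2)) hBA
    fun j => (hAsucc j).symm ▸ hdisj _ (hA j).1 (hA j).2
  exact ⟨g, fun j => B (A j), fun j => ⟨(hBA j).trans (hA j).1, hPB _ (hA j).1 (hA j).2⟩, hg⟩

end BumpFamilies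

section AccumulationPoints

variable {X : Type*} [TopologicalSpace X] {A S : Set X} {q : X}

theorem infinite_inter_of_accPt [T1Space X] (hq : AccPt q (𝓟 A)) {V : Set X} (hV : V ∈ 𝓝 q) :
    (A ∩ V).Infinite := by
  rw [Set.inter_comm]
  exact Set.Infinite.of_accPt (hq.nhds_inter hV)

theorem exists_infinite_subsets_disjoint_closure [T25Space X] {p : X} (hp : AccPt p (𝓟 A))
    (hq : AccPt q (𝓟 A)) (hpq : p ≠ q) :
    ∃ B ⊆ A, ∃ A' ⊆ A, B.Infinite ∧ A'.Infinite ∧ Disjoint (closure B) (closure A') := by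
  obtain ⟨U, hpU, hU, V, hqV, hV, hUV⟩ := exists_open_nhds_disjoint_closure hpq
  exact ⟨A ∩ U, Set.inter_subset_left, A ∩ V, Set.inter_subset_left,
    infinite_inter_of_accPt hp (hU.mem_nhds hpU), infinite_inter_of_accPt hq (hV.mem_nhds hqV),
    hUV.mono (closure_mono Set.inter_subset_right) (closure_mono Set.inter_subset_right)⟩

theorem exists_singleton_infinite_subset_disjoint_closure [T25Space X] (hq : AccPt q (𝓟 A)) :
    ∃ z ∈ A, ∃ A' ⊆ A, A'.Infinite ∧ Disjoint (closure {z}) (closure A') := by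
  obtain ⟨z, ⟨-, hzA⟩, hzq⟩ := accPt_iff_nhds.1 hq Set.univ univ_mem
  obtain ⟨U, hzU, -, V, hqV, hV, hUV⟩ := exists_open_nhds_disjoint_closure hzq
  exact ⟨z, hzA, A ∩ V, Set.inter_subset_left, infinite_inter_of_accPt hq (hV.mem_nhds hqV),
    hUV.mono (closure_mono (Set.singleton_subset_iff.2 hzU)) (closure_mono Set.inter_subset_right)⟩

theorem tendsto_cofinite_of_forall_accPt_eq [CompactSpace X]
    (hq : ∀ p, AccPt p (𝓟 A) → p = q) {ι : Type*} {z : ι → X} (hz : Function.Injective z)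
    (hzA : ∀ k, z k ∈ A) : Tendsto z cofinite (𝓝 q) := by
  intro V hV
  have hfin : (A \ V).Finite := by
    by_contra hinf
    obtain ⟨p, hp⟩ := Set.Infinite.exists_accPt_principal hinf
    obtain rfl := hq p (hp.mono (principal_mono.2 Set.sdiff_subset))
    obtain ⟨y, ⟨hyV, -, hyV'⟩, -⟩ := accPt_iff_nhds.1 hp V hV
    exact hyV' hyV
  exact (hfin.preimage hz.injOn).subset fun k hk => ⟨hzA k, hk⟩

theorem exists_isDisjointBumpFamily_dichotomy [CompactSpace X] [T2Space X] (hS : S.Infinite) :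
    (∃ (g : ℕ → C(X, ℝ)) (B : ℕ → Set X),
      (∀ j, B j ⊆ S ∧ (B j).Infinite) ∧ IsDisjointBumpFamily g B) ∨
    ∃ (g : ℕ → C(X, ℝ)) (z : ℕ → X) (q : X),
      (∀ k, z k ∈ S) ∧ Tendsto z cofinite (𝓝 q) ∧ IsDisjointBumpFamily g fun k => {z k} := by
  by_cases hsplit : ∀ A ⊆ S, A.Infinite → ∃ p q, AccPt p (𝓟 A) ∧ AccPt q (𝓟 A) ∧ p ≠ q
  · refine .inl (exists_isDisjointBumpFamily_of_exhaustion hS fun A hAS hA => ?_)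
    obtain ⟨p, q, hp, hq, hpq⟩ := hsplit A hAS hA
    exact exists_infinite_subsets_disjoint_closure hp hq hpq
  · push Not at hsplit
    obtain ⟨A, hAS, hA, hunique⟩ := hsplit
    obtain ⟨q, hq⟩ := hA.exists_accPt_principal
    obtain ⟨g, B, hB, hg⟩ := exists_isDisjointBumpFamily_of_exhaustion hA
      (P := fun B => ∃ z, B = {z}) fun A' _ hA' => by
        obtain ⟨p, hp⟩ := hA'.exists_accPt_principal
        obtain ⟨z, hz, A'', hA'', hinf, hdisj⟩ :=
          exists_singleton_infinite_subset_disjoint_closure hp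
        exact ⟨{z}, Set.singleton_subset_iff.2 hz, A'', hA'', ⟨z, rfl⟩, hinf, hdisj⟩
    choose hBA z hz using hB
    obtain rfl : B = fun k => {z k} := funext hz
    have hzA : ∀ k, z k ∈ A := fun k => hBA k rfl
    have hzq : Tendsto z cofinite (𝓝 q) := tendsto_cofinite_of_forall_accPt_eq
      (fun p hp => hunique p q hp hq) hg.injective_of_singleton hzA
    exact .inr ⟨g, z, q, fun k => hAS (hzA k), hzq, hg⟩

end AccumulationPoints

section NonWeakMultipliers

theorem exists_frequently_le_abs_of_not_tendsto_zero {ι : Type*} {l : Filter ι} {u : ι → ℝ}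
    (hu : ¬ Tendsto u l (𝓝 0)) : ∃ ε > 0, ∃ᶠ i in l, ε ≤ |u i| := by
  simpa [Metric.tendsto_nhds] using hu

theorem frequently_and_mem_of_subset_image {X : Type*} {x : ℕ → X} {p : ℕ → Prop} {B : Set X}
    (hB : B.Infinite) (hBx : B ⊆ x '' {n | p n}) : ∃ᶠ n in atTop, p n ∧ x n ∈ B := by
  refine Nat.frequently_atTop_iff_infinite.2 (.of_image x (hB.mono fun y hy => ?_))
  obtain ⟨n, hn, rfl⟩ := hBx hy
  exact ⟨n, ⟨hn, hy⟩, rfl⟩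

open scoped NNReal

variable {K : Type*} [TopologicalSpace K] [CompactSpace K]

theorem spaceable_setOf_not_isWeakMultiplier_of_pairwise_mul_eq_zero {e : ℕ → C(K, ℝ)}
    {x : ℕ → K} {M : ℝ} (hM : ∀ n, ‖e n‖ ≤ M) (he : ∀ i j, i ≠ j → e i * e j = 0)
    (hx : ∀ n, e n (x n) = 0)
    {R : ℕ → C(K, ℝ) →L[ℝ] C(K, ℝ)} {C : ℝ≥0} {ε : ℝ} (hC : ∀ j, ‖R j‖ ≤ C) (hε : 0 < ε)
    (hR : ∀ f, Pairwise fun i j => R i f * R j f = 0)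
    (hlow : ∀ j, ∃ᶠ n in atTop, ε ≤ |R j (e n) (x n)|) :
    Spaceable {T : C(K, ℝ) →L[ℝ] C(K, ℝ) | ¬ IsWeakMultiplier T} := by
  let φ (n : ℕ) : C(K, ℝ) →ₗ[ℝ] ℝ := (ContinuousMap.evalCLM ℝ (x n)).toLinearMap
  have hcoord : ∀ (a : ℕ →₀ ℝ) (j : ℕ),
      ∃ᶠ n in atTop, |a j| * ε ≤ ‖φ n (a.sum fun i r => r • R i (e n))‖ := fun a j =>
    (hlow j).mono fun n hn => by
      have hne : R j (e n) (x n) ≠ 0 := abs_pos.1 (hε.trans_le hn)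
      change |a j| * ε ≤ |(a.sum fun i r => r • R i (e n)) (x n)|
      rw [finsuppSum_smul_apply_of_pairwise_mul_eq_zero (hR (e n)) a hne, abs_mul]
      gcongr
  exact (spaceable_setOf_not_tendsto_apply hM (fun n v => v.norm_coe_le_norm (x n)) hε
    (fun a j hj u => norm_finsuppSum_smul_le_of_pairwise_mul_eq_zero (hR u)
      (fun i => (R i).le_of_opNorm_le (hC i) u) hj) hcoord).mono
    fun T hT hmul => hT (hmul e x ⟨M, hM⟩ he hx)

theorem infinite_image_of_frequently_le_abs_apply {T : C(K, ℝ) →L[ℝ] C(K, ℝ)} {e : ℕ → C(K, ℝ)}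
    {x : ℕ → K} {M ε : ℝ} (hM : ∀ n, ‖e n‖ ≤ M) (he : Pairwise fun i j => e i * e j = 0)
    (hε : 0 < ε) (hlarge : ∃ᶠ n in atTop, ε ≤ |T (e n) (x n)|) :
    (x '' {n | ε ≤ |T (e n) (x n)|}).Infinite := by
  intro hfin
  have hsmall : ∀ᶠ n in atTop, ∀ y ∈ x '' {n | ε ≤ |T (e n) (x n)|}, |T (e n) y| < ε :=
    (eventually_all_finite hfin).2 fun y _ =>
      (tendsto_apply_apply_of_pairwise_mul_eq_zero T y hM he).abs.eventually_lt_const (by simpa)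
  obtain ⟨n, hn, hn'⟩ := (hlarge.and_eventually hsmall).exists
  exact (hn' _ ⟨n, hn, rfl⟩).not_ge hn

theorem exists_clm_pairwise_mul_eq_zero_of_tendsto (T : C(K, ℝ) →L[ℝ] C(K, ℝ))
    {g : ℕ → C(K, ℝ)} {z : ℕ → K} {q : K} (hz : Tendsto z cofinite (𝓝 q))
    (hg : IsDisjointBumpFamily g fun k => {z k}) :
    ∃ R : ℕ → C(K, ℝ) →L[ℝ] C(K, ℝ), (∀ j, ‖R j‖ ≤ 2 * ‖T‖) ∧
      (∀ f, Pairwise fun i j => R i f * R j f = 0) ∧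
      ∀ j m f, R j f (z (Nat.pair j m)) = T f (z (Nat.pair j m)) - T f q := by
  let a (k : ℕ) : C(K, ℝ) →L[ℝ] ℝ :=
    (ContinuousMap.evalCLM ℝ (z k)).comp T - (ContinuousMap.evalCLM ℝ q).comp T
  have ha : ∀ k, ‖a k‖ ≤ 2 * ‖T‖ := fun k => by
    calc ‖a k‖ ≤ ‖(ContinuousMap.evalCLM ℝ (z k)).comp T‖ + ‖(ContinuousMap.evalCLM ℝ q).comp T‖ :=
          norm_sub_le ((ContinuousMap.evalCLM ℝ (z k)).comp T) _
      _ ≤ ‖T‖ + ‖T‖ := add_le_add (norm_evalCLM_comp_le T (z k)) (norm_evalCLM_comp_le T q)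
      _ = 2 * ‖T‖ := (two_mul _).symm
  have hlim : ∀ f, Tendsto (fun k => a k f) cofinite (𝓝 0) := fun f => by
    rw [← sub_self (T f q)]
    exact (((T f).continuous.tendsto q).comp hz).sub_const (T f q)
  have hpair : ∀ j, Function.Injective (Nat.pair j) := fun j m m' h => (Nat.pair_eq_pair.1 h).2
  choose R hR hRapply using fun j => exists_clm_apply_eq_tsum (f := fun m => g (Nat.pair j m))
    (fun m => hg.norm_le_one _) (hg.pairwise_mul_eq_zero.comp_of_injective (hpair j))
    (a := fun m => a (Nat.pair j m)) (C := 2 * ‖T‖₊) (fun m => ha _)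
    fun f => (hlim f).comp (hpair j).tendsto_cofinite
  refine ⟨R, hR, fun f i j hij => ContinuousMap.ext fun y => ?_, fun j m f => ?_⟩
  · by_contra hne
    obtain ⟨hi, hj⟩ := mul_ne_zero_iff.1 hne
    rw [hRapply] at hi hj
    obtain ⟨m, hm⟩ : ∃ m, a (Nat.pair i m) f * g (Nat.pair i m) y ≠ 0 := by
      by_contra! h
      exact hi (by simp only [h, tsum_zero])
    obtain ⟨m', hm'⟩ : ∃ m, a (Nat.pair j m) f * g (Nat.pair j m) y ≠ 0 := by
      by_contra! h
      exact hj (by simp only [h, tsum_zero])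
    have hk : Nat.pair i m ≠ Nat.pair j m' := fun h => hij (Nat.pair_eq_pair.1 h).1
    exact mul_ne_zero (right_ne_zero_of_mul hm) (right_ne_zero_of_mul hm')
      (DFunLike.congr_fun (hg.pairwise_mul_eq_zero hk) y)
  · rw [hRapply, tsum_eq_single m fun m' hm' => by
      rw [hg.apply_eq_zero ((hpair j).ne hm') rfl, mul_zero], hg.eqOn_one _ rfl, Pi.one_apply,
      mul_one]
    rfl

theorem spaceable_setOf_not_isWeakMultiplier [T2Space K] {T : C(K, ℝ) →L[ℝ] C(K, ℝ)}
    (hT : ¬ IsWeakMultiplier T) :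
    Spaceable {T : C(K, ℝ) →L[ℝ] C(K, ℝ) | ¬ IsWeakMultiplier T} := by
  simp only [IsWeakMultiplier, not_forall] at hT
  obtain ⟨e, x, ⟨M, hM⟩, he, hx, hlim⟩ := hT
  obtain ⟨ε, hε, hlarge⟩ := exists_frequently_le_abs_of_not_tendsto_zero hlim
  rcases exists_isDisjointBumpFamily_dichotomy
    (infinite_image_of_frequently_le_abs_apply hM he hε hlarge) with
    ⟨g, B, hB, hg⟩ | ⟨g, z, q, hzS, hzq, hg⟩
  · refine spaceable_setOf_not_isWeakMultiplier_of_pairwise_mul_eq_zero hM he hx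
      (R := fun j => (ContinuousLinearMap.mul ℝ C(K, ℝ) (g j)).comp T) (C := ‖T‖₊) (fun j => ?_) hε
      (fun f i j hij => ?_) fun j => ?_
    · refine ContinuousLinearMap.opNorm_le_bound _ (norm_nonneg _) fun f => ?_
      exact (norm_mul_le _ _).trans
        ((mul_le_of_le_one_left (norm_nonneg _) (hg.norm_le_one j)).trans (T.le_opNorm f))
    · change g i * T f * (g j * T f) = 0
      rw [mul_mul_mul_comm, hg.pairwise_mul_eq_zero hij, zero_mul]
    · refine (frequently_and_mem_of_subset_image (hB j).2 (hB j).1).mono fun n ⟨hn, hxn⟩ => ?_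
      change ε ≤ |g j (x n) * T (e n) (x n)|
      rwa [hg.eqOn_one j hxn, Pi.one_apply, one_mul]
  · obtain ⟨R, hRnorm, hRmul, hR⟩ := exists_clm_pairwise_mul_eq_zero_of_tendsto T hzq hg
    refine spaceable_setOf_not_isWeakMultiplier_of_pairwise_mul_eq_zero hM he hx (C := 2 * ‖T‖₊)
      hRnorm (half_pos hε) hRmul fun j => ?_
    have hzinj : Function.Injective fun m => z (Nat.pair j m) :=
      hg.injective_of_singleton.comp fun m m' h => (Nat.pair_eq_pair.1 h).2
    have hrange : Set.range (fun m => z (Nat.pair j m)) ⊆ x '' {n | ε ≤ |T (e n) (x n)|} :=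
      Set.range_subset_iff.2 fun m => hzS _
    have hsmall : ∀ᶠ n in atTop, |T (e n) q| < ε / 2 :=
      (tendsto_apply_apply_of_pairwise_mul_eq_zero T q hM he).abs.eventually_lt_const (by simpa)
    refine ((frequently_and_mem_of_subset_image (Set.infinite_range_of_injective hzinj)
      hrange).and_eventually hsmall).mono ?_
    rintro n ⟨⟨hn, m, hm⟩, hq⟩
    rw [← hm] at hn ⊢
    rw [hR]
    linarith [abs_sub_abs_le_abs_sub (T (e n) (z (Nat.pair j m))) (T (e n) q)]

end NonWeakMultipliers

/-- If there is an operator on `C(K, ℝ)` which is an isomorphism onto its range (injective and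
bounded below) but not surjective, then the set of non weak multipliers is spaceable. -/
theorem spaceable_nonWeakMultipliers_of_into_isomorphism
    {K : Type*} [TopologicalSpace K] [CompactSpace K] [T2Space K]
    (h : ∃ T : C(K, ℝ) →L[ℝ] C(K, ℝ), Function.Injective T ∧
      (∃ c : ℝ, 0 < c ∧ ∀ f : C(K, ℝ), c * ‖f‖ ≤ ‖T f‖) ∧ ¬ Function.Surjective T) :
    Spaceable {T : C(K, ℝ) →L[ℝ] C(K, ℝ) | ¬ IsWeakMultiplier T} := by
  obtain ⟨T, -, hbelow, hsurj⟩ := h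
  obtain ⟨c, hc⟩ := antilipschitzWith_iff_exists_mul_le_norm.2 hbelow
  exact spaceable_setOf_not_isWeakMultiplier fun hT =>
    hsurj (hT.surjective_of_antilipschitzWith hc)
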